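/- Let r ≥ 3 and q = p^h > 4 with p prime, h ≥ 1, and let V be a quasi-Hermitian variety of PG(r,q^2) whose characteristic vector v^V belongs to C_p. If π is a plane of PG(r,q^2) containing exactly q^3 + 1 points of V, then π ∩ V is a classical unital of π. -/

import Mathlib

/-!
Common framework: `ProjPoint F n` is the set of points of the projective space
PG(n-1, |F|) (so PG(r, q²) corresponds to `n = r + 1` and `Fintype.card F = q ^ 2`).
Projective subspaces of projective dimension `k` are the submodules of `Fin n → F`
of `finrank` equal to `k + 1`; lines have finrank 2, planes finrank 3 and
hyperplanes finrank `n - 1 = r`.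
-/

open Module Matrix

/-- The points of the projective space PG(n-1, |F|): one-dimensional subspaces
of `F^n`. -/
def ProjPoint (F : Type) [Field F] (n : ℕ) : Type :=
  {W : Submodule F (Fin n → F) // finrank F W = 1}

/-- The set of projective points lying in a given subspace `W`. -/
def pointsIn (F : Type) [Field F] (n : ℕ) (W : Submodule F (Fin n → F)) :
    Set (ProjPoint F n) :=
  {P | P.1 ≤ W}

/-- The number of points of `V` lying in the subspace `W`. -/
noncomputable def secant (F : Type) [Field F] (n : ℕ) (V : Set (ProjPoint F n))
    (W : Submodule F (Fin n → F)) : ℕ :=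
  (V ∩ pointsIn F n W).ncard

/-- The characteristic vector of a set of projective points, with values in `F_p`. -/
noncomputable def charVec (F : Type) [Field F] (p n : ℕ) (S : Set (ProjPoint F n)) :
    ProjPoint F n → ZMod p :=
  Set.indicator S 1

/-- `C_p`: the `F_p`-code spanned by the characteristic vectors of hyperplanes. -/
def hypCode (F : Type) [Field F] (p n : ℕ) :
    Submodule (ZMod p) (ProjPoint F n → ZMod p) :=
  Submodule.span (ZMod p)
    {v | ∃ H : Submodule F (Fin n → F), finrank F H = n - 1 ∧
      v = charVec F p n (pointsIn F n H)}

/-- A quasi-Hermitian variety of PG(r, q²): it has the size of a non-singular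
Hermitian variety and the same two intersection numbers with hyperplanes.
(All identities are stated multiplied through by `q² - 1`.) -/
def IsQuasiHermitian (F : Type) [Field F] (q r : ℕ)
    (V : Set (ProjPoint F (r + 1))) : Prop :=
  (V.ncard : ℤ) * ((q : ℤ) ^ 2 - 1)
      = ((q : ℤ) ^ (r + 1) + (-1) ^ r) * ((q : ℤ) ^ r - (-1) ^ r) ∧
  ∀ H : Submodule F (Fin (r + 1) → F), finrank F H = r →
    ((secant F (r + 1) V H : ℤ) * ((q : ℤ) ^ 2 - 1)
        = ((q : ℤ) ^ r + (-1) ^ (r - 1)) * ((q : ℤ) ^ (r - 1) - (-1) ^ (r - 1)) ∨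
     (secant F (r + 1) V H : ℤ) * ((q : ℤ) ^ 2 - 1)
        = ((q : ℤ) ^ 2 - 1)
          + (q : ℤ) ^ 2 * (((q : ℤ) ^ (r - 1) + (-1) ^ r) * ((q : ℤ) ^ (r - 2) - (-1) ^ r)))

/-- The zero set, in PG(n-1,|F|), of the Hermitian form `x ↦ xᵀ A x^(q)`. -/
def hermSet (F : Type) [Field F] (q n : ℕ) (A : Matrix (Fin n) (Fin n) F) :
    Set (ProjPoint F n) :=
  {P | ∀ x ∈ P.1, ∑ i, ∑ j, x i * A i j * (x j) ^ q = 0}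

/-- A non-singular Hermitian variety of PG(n-1, q²). -/
def IsNonsingHermitian (F : Type) [Field F] (q n : ℕ)
    (V : Set (ProjPoint F n)) : Prop :=
  ∃ A : Matrix (Fin n) (Fin n) F, IsUnit A.det ∧
    Aᵀ = A.map (fun a => a ^ q) ∧ V = hermSet F q n A

/-- A singular Hermitian variety of PG(n-1, q²) whose singular space (the radical
of the Hermitian form) has projective dimension `d`. -/
def IsSingularHermitian (F : Type) [Field F] (q n d : ℕ)
    (S : Set (ProjPoint F n)) : Prop :=
  ∃ A : Matrix (Fin n) (Fin n) F,
    Aᵀ = A.map (fun a => a ^ q) ∧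
    finrank F (LinearMap.ker (Matrix.toLin' Aᵀ)) = d + 1 ∧
    S = hermSet F q n A

/-- A `d`-singular quasi-Hermitian variety of PG(r, q²). -/
def IsSingularQuasiHermitian (F : Type) [Field F] (q r d : ℕ)
    (S : Set (ProjPoint F (r + 1))) : Prop :=
  ∃ S₀ : Set (ProjPoint F (r + 1)), IsSingularHermitian F q (r + 1) d S₀ ∧
    S.ncard = S₀.ncard ∧
    ∀ H : Submodule F (Fin (r + 1) → F), finrank F H = r →
      ∃ H₀ : Submodule F (Fin (r + 1) → F), finrank F H₀ = r ∧
        secant F (r + 1) S H = secant F (r + 1) S₀ H₀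

/-- `U` is a classical unital (Hermitian curve) of the plane `π` of PG(n-1, q²):
in some coordinatization `e` of `π`, it is the zero set of a non-degenerate
Hermitian form on `F³`. -/
def IsClassicalUnital (F : Type) [Field F] (q n : ℕ)
    (π : Submodule F (Fin n → F)) (U : Set (ProjPoint F n)) : Prop :=
  ∃ e : (Fin 3 → F) →ₗ[F] (Fin n → F), LinearMap.ker e = ⊥ ∧ LinearMap.range e = π ∧
    ∃ A : Matrix (Fin 3) (Fin 3) F, IsUnit A.det ∧ Aᵀ = A.map (fun a => a ^ q) ∧
      U = {P | ∃ y : Fin 3 → F, y ≠ 0 ∧ P.1 = Submodule.span F {e y} ∧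
        ∑ i, ∑ j, y i * A i j * (y j) ^ q = 0}

namespace QH
open scoped Classical
open Polynomial
set_option linter.unusedSectionVars false

section A1
variable {F : Type*} [Field F] [Fintype F] {E : Type*} [AddCommGroup E] [Module F E]

/-- indicator of the kernel of a functional -/
noncomputable def ind (φ : E →ₗ[F] F) : E → F := fun x => if φ x = 0 then 1 else 0

variable (F E) in
/-- the code generated by the kernels of functionals, over `F` -/
noncomputable def Cd : Submodule F (E → F) := Submodule.span F (Set.range (ind (F := F) (E := E)))

theorem ind_mem (φ : E →ₗ[F] F) : ind φ ∈ Cd F E := Submodule.subset_span ⟨φ, rfl⟩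

theorem Cd.smul_inv {c : E → F} (hc : c ∈ Cd F E) {a : F} (ha : a ≠ 0) (x : E) :
    c (a • x) = c x := by
  induction hc using Submodule.span_induction with
  | mem f hf => obtain ⟨φ, rfl⟩ := hf; simp [ind, ha]
  | zero => simp
  | add f g _ _ h1 h2 => simp [h1, h2]
  | smul b f _ h1 => simp [h1]

theorem Cd.comp {E' : Type*} [AddCommGroup E'] [Module F E'] {c : E → F} (hc : c ∈ Cd F E)
    (L : E' →ₗ[F] E) : (fun x => c (L x)) ∈ Cd F E' := by
  induction hc using Submodule.span_induction with
  | mem f hf =>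
    obtain ⟨φ, rfl⟩ := hf
    exact Submodule.subset_span ⟨φ.comp L, rfl⟩
  | zero => exact Submodule.zero_mem _
  | add f g _ _ h1 h2 => exact Submodule.add_mem _ h1 h2
  | smul b f _ h1 => exact Submodule.smul_mem _ b h1

theorem sum_pow_zero (j : ℕ) (hj : j + 1 < Fintype.card F) : ∑ z : F, z ^ j = 0 :=
  FiniteField.sum_pow_lt_card_sub_one F j (by omega)

theorem Cd.psum {c : E → F} (hc : c ∈ Cd F E) (R : E) :
    ∃ l : (E →ₗ[F] F) →₀ F, ∀ j : ℕ, j + 1 < Fintype.card F → ∀ w : E,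
      ∑ z : F, z ^ j * c (w + z • R) = l.sum (fun ψ a => a * (ψ w) ^ j) := by
  induction hc using Submodule.span_induction with
  | mem f hf =>
    obtain ⟨φ, rfl⟩ := hf
    by_cases hR : φ R = 0
    · refine ⟨0, fun j hj w => ?_⟩
      simp only [ind, map_add, map_smul, hR, smul_zero, add_zero, Finsupp.sum_zero_index]
      rw [← Finset.sum_mul, sum_pow_zero j hj, zero_mul]
    · refine ⟨Finsupp.single (-(φ R)⁻¹ • φ) 1, fun j hj w => ?_⟩
      rw [Finsupp.sum_single_index (by simp)]
      rw [Finset.sum_eq_single (-(φ R)⁻¹ * φ w)]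
      · have h0 : φ w + (-(φ R)⁻¹ * φ w) * φ R = 0 := by field_simp; ring
        simp only [ind, map_add, map_smul, smul_eq_mul, h0, if_true]
        simp [hR]
      · intro z _ hz
        have : ¬ (φ w + z * φ R = 0) := by
          intro h
          apply hz
          field_simp
          linear_combination h
        simp [ind, this]
      · simp
  | zero => exact ⟨0, fun j hj w => by simp⟩
  | add f g _ _ h1 h2 =>
    obtain ⟨l1, h1⟩ := h1
    obtain ⟨l2, h2⟩ := h2
    refine ⟨l1 + l2, fun j hj w => ?_⟩
    rw [Finsupp.sum_add_index' (by simp) (by intros; ring), ← h1 j hj, ← h2 j hj,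
      ← Finset.sum_add_distrib]
    refine Finset.sum_congr rfl fun z _ => ?_
    simp [mul_add]
  | smul b f _ h1 =>
    obtain ⟨l1, h1⟩ := h1
    refine ⟨b • l1, fun j hj w => ?_⟩
    rw [Finsupp.sum_smul_index (by simp)]
    simp only [mul_assoc]
    rw [← Finsupp.mul_sum, ← h1 j hj, Finset.mul_sum]
    refine Finset.sum_congr rfl fun z _ => ?_
    simp only [Pi.smul_apply, smul_eq_mul]; ring

theorem Cd.line_sum {c : E → F} (hc : c ∈ Cd F E) (R w : E) :
    ∑ z : F, c (w + z • R) + c R = c 0 := by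
  induction hc using Submodule.span_induction with
  | mem f hf =>
    obtain ⟨φ, rfl⟩ := hf
    by_cases hR : φ R = 0
    · simp [ind, hR]
    · rw [Finset.sum_eq_single (-(φ R)⁻¹ * φ w)]
      · have h0 : φ w + (-(φ R)⁻¹ * φ w) * φ R = 0 := by field_simp; ring
        simp only [ind, map_add, map_smul, smul_eq_mul, h0, if_true]
        simp [hR]
      · intro z _ hz
        have : ¬ (φ w + z * φ R = 0) := by
          intro h
          apply hz
          field_simp
          linear_combination h
        simp [ind, this]
      · simp
  | zero => simp
  | add f g _ _ h1 h2 =>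
    simp only [Pi.add_apply, Finset.sum_add_distrib, ← h1, ← h2]; ring
  | smul b f _ h1 =>
    simp only [Pi.smul_apply, smul_eq_mul, ← h1, ← Finset.mul_sum]; ring

/-! ### the Hankel determinant -/

theorem coeff_prod_var {ι : Type*} (s : Finset ι) (f : ι → F[X]) (d : ι → ℕ)
    (h : ∀ i ∈ s, (f i).natDegree ≤ d i) :
    (∏ i ∈ s, f i).natDegree ≤ ∑ i ∈ s, d i ∧
    (∏ i ∈ s, f i).coeff (∑ i ∈ s, d i) = ∏ i ∈ s, (f i).coeff (d i) := by
  induction s using Finset.induction_on with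
  | empty => simp
  | insert a s ha ih =>
    have ih' := ih (fun i hi => h i (Finset.mem_insert_of_mem hi))
    have h1 := h a (Finset.mem_insert_self a s)
    rw [Finset.prod_insert ha, Finset.sum_insert ha, Finset.prod_insert ha]
    refine ⟨natDegree_mul_le_of_le h1 ih'.1, ?_⟩
    rw [coeff_mul_add_eq_of_natDegree_le h1 ih'.1, ih'.2]

theorem det_hankel_coeff (k : ℕ) (P : ℕ → F[X]) (hP : ∀ j, (P j).natDegree ≤ j) :
    (Matrix.det (Matrix.of fun i j : Fin k => P (i + j))).natDegree ≤ k * (k - 1) ∧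
    (Matrix.det (Matrix.of fun i j : Fin k => P (i + j))).coeff (k * (k - 1)) =
      Matrix.det (Matrix.of fun i j : Fin k => (P (i + j)).coeff (i + j)) := by
  have hs : ∀ σ : Equiv.Perm (Fin k), ∑ i, (((σ i : Fin k) : ℕ) + (i : ℕ)) = k * (k - 1) := by
    intro σ
    rw [Finset.sum_add_distrib, Equiv.sum_comp σ (fun i : Fin k => (i : ℕ)), Fin.sum_univ_eq_sum_range (fun i => i) k,
      ← Finset.sum_range_id_mul_two k]
    ring
  have key := fun σ : Equiv.Perm (Fin k) => coeff_prod_var Finset.univ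
    (fun i : Fin k => P (((σ i : Fin k) : ℕ) + (i : ℕ))) (fun i => ((σ i : Fin k) : ℕ) + (i : ℕ))
    (fun i _ => hP _)
  simp only [hs] at key
  rw [Matrix.det_apply, Matrix.det_apply]
  refine ⟨?_, ?_⟩
  · refine natDegree_sum_le_of_forall_le _ _ fun σ _ => ?_
    refine (natDegree_smul_le _ _).trans (key σ).1
  · rw [finsetSum_coeff]
    refine Finset.sum_congr rfl fun σ _ => ?_
    rw [Units.smul_def, Units.smul_def, coeff_smul]
    congr 1
    exact (key σ).2

/-- Hankel matrix of a weighted set of exactly `k` points is nonsingular. -/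
theorem det_hankel_ne_zero (k : ℕ) (g : F → F)
    (hk : (Finset.univ.filter fun z => g z ≠ 0).card = k) :
    Matrix.det (Matrix.of fun i j : Fin k => ∑ z, z ^ ((i : ℕ) + j) * g z) ≠ 0 := by
  set S := Finset.univ.filter fun z => g z ≠ 0 with hS
  let e : Fin k ≃ S := (Finset.equivFinOfCardEq hk).symm
  let v : Fin k → F := fun i => (e i : F)
  have : (Matrix.of fun i j : Fin k => ∑ z, z ^ ((i : ℕ) + j) * g z) =
      (vandermonde v)ᵀ * Matrix.diagonal (fun i => g (v i)) * vandermonde v := by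
    ext i j
    rw [Matrix.mul_apply]
    simp only [Matrix.of_apply, Matrix.mul_diagonal, transpose_apply, vandermonde_apply]
    rw [← Finset.sum_filter_of_ne (p := fun z => g z ≠ 0)]
    · rw [← hS, ← Finset.sum_coe_sort S, ← Equiv.sum_comp e]
      refine Finset.sum_congr rfl fun l _ => ?_
      simp only [v]; ring
    · intro z _ h h0; simp [h0] at h
  rw [this, det_mul, det_mul, det_transpose, det_diagonal]
  have hv : (vandermonde v).det ≠ 0 := by
    rw [det_vandermonde_ne_zero_iff]
    exact Subtype.val_injective.comp e.injective
  refine mul_ne_zero (mul_ne_zero hv ?_) hv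
  rw [Finset.prod_ne_zero_iff]
  intro i _
  exact (Finset.mem_filter.mp (e i).2).2

/-- rank drop gives multiplicity -/
theorem det_hankel_dvd (k : ℕ) (P : ℕ → F[X]) (t : F) (g : F → F)
    (hg : ∀ j, j + 2 ≤ 2 * k → (P j).eval t = ∑ z, z ^ j * g z) :
    (X - C t) ^ (k - (Finset.univ.filter fun z => g z ≠ 0).card) ∣
      Matrix.det (Matrix.of fun i j : Fin k => P (i + j)) := by
  set S := Finset.univ.filter fun z => g z ≠ 0 with hS
  set s := S.card with hs
  rcases le_or_gt k s with hks | hks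
  · rw [Nat.sub_eq_zero_of_le hks, pow_zero]; exact one_dvd _
  let G : F[X] := ∏ z ∈ S, (X - C z)
  have hGm : G.Monic := monic_prod_of_monic _ _ fun z _ => monic_X_sub_C z
  have hGd : G.natDegree = s := by
    simp only [G]; rw [natDegree_prod_of_monic _ _ fun z _ => monic_X_sub_C z]; simp [hs]
  have hGz : ∀ z, g z ≠ 0 → G.eval z = 0 := by
    intro z hz
    simp only [G]; rw [eval_prod]
    exact Finset.prod_eq_zero (i := z) (by simp [hS, hz]) (by simp)
  -- the column operation
  let B : Matrix (Fin k) (Fin k) F := Matrix.of fun l j =>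
    if (j : ℕ) < s then (if l = j then 1 else 0)
    else if (j : ℕ) - s ≤ l then G.coeff ((l : ℕ) - ((j : ℕ) - s)) else 0
  have hB : B.det = 1 := by
    rw [det_of_isUpperTriangular]
    · refine Finset.prod_eq_one fun j _ => ?_
      simp only [B, Matrix.of_apply]
      split_ifs with h1 h2
      · rfl
      · have : (j : ℕ) - ((j : ℕ) - s) = G.natDegree := by omega
        rw [this]; exact hGm
      · omega
    · intro l j hlj
      simp only [id] at hlj
      have hlj' : (j : ℕ) < l := hlj
      simp only [B, Matrix.of_apply]
      split_ifs with h1 h2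
      · rw [h2] at hlj; exact absurd hlj (lt_irrefl _)
      · rfl
      · apply coeff_eq_zero_of_natDegree_lt; omega
      · rfl
  set M := (Matrix.of fun i j : Fin k => P (i + j)) with hM
  have hdiv : ∀ i j : Fin k, s ≤ (j : ℕ) → (X - C t) ∣ (M * B.map C) i j := by
    intro i j hj
    rw [dvd_iff_isRoot, IsRoot.def, Matrix.mul_apply, eval_finsetSum]
    simp only [hM, Matrix.of_apply, eval_mul, map_apply, eval_C]
    have h1 : ∀ l : Fin k, (P ((i : ℕ) + l)).eval t * B l j =
        ∑ z, g z * z ^ (i : ℕ) * (z ^ (l : ℕ) * B l j) := by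
      intro l
      rw [hg _ (by omega), Finset.sum_mul]
      refine Finset.sum_congr rfl fun z _ => ?_
      ring
    simp only [h1]
    rw [Finset.sum_comm]
    refine Finset.sum_eq_zero fun z _ => ?_
    rw [← Finset.mul_sum]
    by_cases hz : g z = 0
    · simp [hz]
    have h2 : ∑ l : Fin k, z ^ (l : ℕ) * B l j = z ^ ((j : ℕ) - s) * G.eval z := by
      have e1 : ∑ l : Fin k, z ^ (l : ℕ) * B l j = ∑ l ∈ Finset.range k,
          (if (j : ℕ) - s ≤ l then z ^ l * G.coeff (l - ((j : ℕ) - s)) else 0) := by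
        rw [← Fin.sum_univ_eq_sum_range (fun l => (if (j : ℕ) - s ≤ l then z ^ l * G.coeff (l - ((j : ℕ) - s)) else 0))]
        refine Finset.sum_congr rfl fun l _ => ?_
        simp only [B, Matrix.of_apply, if_neg (not_lt.mpr hj)]
        split_ifs <;> simp
      rw [e1, eval_eq_sum_range, Finset.mul_sum, ← Finset.sum_filter]
      symm
      apply Finset.sum_of_injOn (fun m => m + ((j : ℕ) - s))
      · intro a _ b _ h; simpa using h
      · intro a ha
        have := j.2
        simp at ha ⊢
        omega
      · intro l hl hl2
        simp at hl hl2
        have : G.natDegree < l - ((j : ℕ) - s) := by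
          by_contra hcon
          exact hl2 (l - ((j : ℕ) - s)) (by omega) (by omega)
        rw [coeff_eq_zero_of_natDegree_lt this, mul_zero]
      · intro m hm
        simp only [Nat.add_sub_cancel, pow_add]; ring
    rw [h2, hGz z hz]; ring
  choose! A hA using hdiv
  have hMB : M.det = (M * B.map C).det := by
    have : (B.map (C : F →+* F[X])).det = 1 := by
      rw [← RingHom.mapMatrix_apply, ← RingHom.map_det, hB, map_one]
    rw [det_mul, this, mul_one]
  have hMB2 : (M * B.map C) = Matrix.of fun i j : Fin k => (if s ≤ (j : ℕ) then (X - C t) else 1) *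
      (Matrix.of fun i j : Fin k => if s ≤ (j : ℕ) then A i j else (M * B.map C) i j) i j := by
    ext1 i j
    simp only [Matrix.of_apply]
    split_ifs with h
    · exact hA i j h
    · rw [one_mul]
  rw [hMB, hMB2, det_mul_row]
  refine Dvd.dvd.mul_right ?_ _
  rw [Finset.prod_ite]
  refine Dvd.dvd.mul_right ?_ _
  rw [Finset.prod_const]
  apply pow_dvd_pow
  have : (Finset.univ.filter fun j : Fin k => s ≤ (j : ℕ)).card = k - s := by
    have h3 := Finset.card_filter_add_card_filter_not (s := (Finset.univ : Finset (Fin k))) (fun j : Fin k => (j : ℕ) < s)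
    rw [Fin.card_filter_val_lt] at h3
    simp only [not_lt, Finset.card_univ, Fintype.card_fin] at h3
    omega
  rw [this]

/-- number of `z` with `c (w + z R) ≠ 0` -/
noncomputable def sN (c : E → F) (R w : E) : ℕ :=
  (Finset.univ.filter fun z : F => c (w + z • R) ≠ 0).card

theorem HL {c : E → F} (hc : c ∈ Cd F E) (R a b : E) (k : ℕ) (hk : sN c R b = k)
    (hk2 : 2 * k ≤ Fintype.card F) :
    ∑ t : F, (k - sN c R (a + t • b)) ≤ k * (k - 1) := by
  rcases Nat.eq_zero_or_pos k with rfl | hkpos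
  · simp
  obtain ⟨l, hl⟩ := Cd.psum hc R
  let P : ℕ → F[X] := fun j => l.sum fun ψ x => C x * (C (ψ a) + C (ψ b) * X) ^ j
  have hPd : ∀ j, (P j).natDegree ≤ j := by
    intro j
    refine natDegree_sum_le_of_forall_le _ _ fun ψ _ => ?_
    refine (natDegree_C_mul_le _ _).trans ?_
    refine (natDegree_pow_le).trans ?_
    have : (C (ψ a) + C (ψ b) * X).natDegree ≤ 1 := by compute_degree
    calc j * _ ≤ j * 1 := by gcongr
      _ = j := mul_one j
  have hPe : ∀ j t, (P j).eval t = l.sum fun ψ x => x * (ψ (a + t • b)) ^ j := by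
    intro j t
    simp only [P, Finsupp.sum, eval_finsetSum]
    refine Finset.sum_congr rfl fun ψ _ => ?_
    simp [mul_comm t]
  have hPc : ∀ j, (P j).coeff j = l.sum fun ψ x => x * (ψ b) ^ j := by
    intro j
    simp only [P, Finsupp.sum, finsetSum_coeff, coeff_C_mul]
    refine Finset.sum_congr rfl fun ψ _ => ?_
    congr 1
    have h1 : (C (ψ a) + C (ψ b) * X).natDegree ≤ 1 := by compute_degree
    have := coeff_pow_of_natDegree_le (m := j) h1
    rw [mul_one] at this
    rw [this]
    simp
  have hdet := det_hankel_coeff k P hPd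
  set D := Matrix.det (Matrix.of fun i j : Fin k => P (i + j)) with hD
  have hDc : D.coeff (k * (k - 1)) ≠ 0 := by
    rw [hdet.2]
    have := det_hankel_ne_zero k (fun z => c (b + z • R)) hk
    convert this using 3
    ext i j
    rw [hPc, hl _ (by omega)]
  have hD0 : D ≠ 0 := by
    intro h; rw [h] at hDc; simp at hDc
  have hmul : ∀ t : F, k - sN c R (a + t • b) ≤ D.rootMultiplicity t := by
    intro t
    rw [le_rootMultiplicity_iff hD0]
    refine det_hankel_dvd k P t (fun z => c (a + t • b + z • R)) ?_
    intro j hj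
    rw [hPe, hl _ (by omega)]
  calc ∑ t : F, (k - sN c R (a + t • b)) ≤ ∑ t : F, D.rootMultiplicity t :=
        Finset.sum_le_sum fun t _ => hmul t
    _ = Multiset.card D.roots := by
        simp only [← count_roots]
        exact Multiset.sum_count_eq_card (fun a _ => Finset.mem_univ a)
    _ ≤ D.natDegree := card_roots' D
    _ ≤ k * (k - 1) := hdet.1

end A1
end QH

namespace QH
open scoped Classical
set_option linter.unusedSectionVars false

section A2
variable {F : Type*} [Field F] [Fintype F] {E : Type*} [AddCommGroup E] [Module F E]

/-- linear independence of a pair -/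
def LI2 (F : Type*) [Field F] {E : Type*} [AddCommGroup E] [Module F E] (u v : E) : Prop :=
  ∀ x y : F, x • u + y • v = 0 → x = 0 ∧ y = 0

/-- linear independence of a triple -/
def LI3 (F : Type*) [Field F] {E : Type*} [AddCommGroup E] [Module F E] (u v w : E) : Prop :=
  ∀ x y z : F, x • u + y • v + z • w = 0 → x = 0 ∧ y = 0 ∧ z = 0

/-- 0/1 value -/
noncomputable def iv (c : E → F) (x : E) : ℕ := if c x ≠ 0 then 1 else 0

/-- number of points of the line `⟨R,b⟩` in the support -/
noncomputable def nl (c : E → F) (R b : E) : ℕ := iv c R + sN c R b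

/-- number of points of the plane `⟨R,b,a⟩` in the support -/
noncomputable def pl (c : E → F) (R b a : E) : ℕ := nl c R b + ∑ t : F, sN c R (a + t • b)

theorem sN_eq (c : E → F) (R w : E) : sN c R w = ∑ z : F, iv c (w + z • R) := by
  simp only [sN, iv, Finset.card_filter]

/-- size of support on a subspace, nonzero vectors -/
noncomputable def Sc [Fintype E] (c : E → F) (L : Submodule F E) : ℕ :=
  (Finset.univ.filter fun x : E => x ∈ L ∧ x ≠ 0 ∧ c x ≠ 0).card

theorem iv_smul {c : E → F} (hc : c ∈ Cd F E) {a : F} (ha : a ≠ 0) (x : E) :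
    iv c (a • x) = iv c x := by simp only [iv, Cd.smul_inv hc ha]

theorem sum_scale {c : E → F} (hc : c ∈ Cd F E) (w R : E) {y : F} (hy : y ≠ 0) :
    ∑ x : F, iv c (x • R + y • w) = ∑ x : F, iv c (w + x • R) := by
  rw [← Equiv.sum_comp (Equiv.mulLeft₀ y hy)]
  refine Finset.sum_congr rfl fun x _ => ?_
  rw [← iv_smul hc hy (w + x • R)]
  congr 1
  simp only [Equiv.mulLeft₀_apply, smul_add, smul_smul]
  rw [add_comm]

theorem sum_erase_zero (f : F → ℕ) (K : ℕ) (h : ∀ y : F, y ≠ 0 → f y = K) :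
    ∑ y : F, f y = f 0 + (Fintype.card F - 1) * K := by
  rw [← Finset.add_sum_erase _ _ (Finset.mem_univ (0 : F))]
  congr 1
  rw [Finset.sum_congr rfl (g := fun _ => K)]
  · simp [Finset.card_erase_of_mem]
  · intro y hy; exact h y (Finset.ne_of_mem_erase hy)

theorem sum2 {c : E → F} (hc : c ∈ Cd F E) (R b : E) :
    ∑ y : F, ∑ x : F, iv c (x • R + y • b) = iv c 0 + (Fintype.card F - 1) * nl c R b := by
  rw [sum_erase_zero _ (sN c R b) (fun y hy => by rw [sum_scale hc b R hy, sN_eq])]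
  simp only [zero_smul, add_zero]
  rw [sum_erase_zero _ (iv c R) (fun x hx => iv_smul hc hx R), zero_smul, nl]
  ring

theorem sum3 {c : E → F} (hc : c ∈ Cd F E) (R b a : E) :
    ∑ z : F, ∑ y : F, ∑ x : F, iv c (x • R + y • b + z • a) =
      iv c 0 + (Fintype.card F - 1) * pl c R b a := by
  rw [sum_erase_zero _ (∑ t : F, sN c R (a + t • b))]
  · simp only [zero_smul, add_zero]
    rw [sum2 hc, pl]; ring
  · intro z hz
    rw [← Equiv.sum_comp (Equiv.mulLeft₀ z hz)]
    refine Finset.sum_congr rfl fun y _ => ?_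
    rw [sN_eq, ← sum_scale hc _ _ hz]
    refine Finset.sum_congr rfl fun x _ => ?_
    congr 1
    simp only [Equiv.mulLeft₀_apply, smul_add, smul_smul]
    abel

theorem Sc_eq [Fintype E] (c : E → F) (L : Submodule F E) :
    ∑ x ∈ Finset.univ.filter (fun x : E => x ∈ L), iv c x = iv c 0 + Sc c L := by
  rw [← Finset.add_sum_erase _ _ (a := (0 : E)) (by simp)]
  congr 1
  rw [Sc]
  simp only [iv]
  rw [← Finset.card_filter]
  congr 1
  ext x
  simp [and_comm, and_left_comm]

theorem line_count [Fintype E] {c : E → F} (hc : c ∈ Cd F E) {R b : E} (h : LI2 F R b) :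
    Sc c (Submodule.span F {R, b}) = (Fintype.card F - 1) * nl c R b := by
  have h1 := Sc_eq c (Submodule.span F {R, b})
  have h2 := sum2 hc R b
  have : ∑ x ∈ Finset.univ.filter (fun x : E => x ∈ Submodule.span F {R, b}), iv c x =
      ∑ y : F, ∑ x : F, iv c (x • R + y • b) := by
    rw [← Fintype.sum_prod_type' (fun y x => iv c (x • R + y • b))]
    symm
    apply Finset.sum_of_injOn (fun p : F × F => p.2 • R + p.1 • b)
    · rintro ⟨y, x⟩ _ ⟨y', x'⟩ _ heq
      simp only at heq
      have := h (x - x') (y - y') (by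
        have := sub_eq_zero.mpr heq
        rw [← this]; module)
      simp only [sub_eq_zero] at this
      rw [this.1, this.2]
    · rintro ⟨y, x⟩ _
      simp only [Finset.coe_filter, Finset.mem_univ, true_and, Set.mem_ofPred_eq]
      exact Submodule.mem_span_pair.mpr ⟨x, y, rfl⟩
    · intro i hi hi2
      exfalso
      simp only [Finset.mem_filter, Finset.mem_univ, true_and] at hi
      obtain ⟨x, y, rfl⟩ := Submodule.mem_span_pair.mp hi
      exact hi2 ⟨(y, x), by simp, rfl⟩
    · intro i _; rfl
  omega

theorem plane_count [Fintype E] {c : E → F} (hc : c ∈ Cd F E) {R b a : E} (h : LI3 F R b a) :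
    Sc c (Submodule.span F {R, b, a}) = (Fintype.card F - 1) * pl c R b a := by
  have h1 := Sc_eq c (Submodule.span F {R, b, a})
  have h2 := sum3 hc R b a
  have : ∑ x ∈ Finset.univ.filter (fun x : E => x ∈ Submodule.span F {R, b, a}), iv c x =
      ∑ z : F, ∑ y : F, ∑ x : F, iv c (x • R + y • b + z • a) := by
    simp only [← Fintype.sum_prod_type']
    symm
    apply Finset.sum_of_injOn (fun p : F × F × F => p.2.2 • R + p.2.1 • b + p.1 • a)
    · rintro ⟨z, y, x⟩ _ ⟨z', y', x'⟩ _ heq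
      simp only at heq
      have := h (x - x') (y - y') (z - z') (by
        have := sub_eq_zero.mpr heq
        rw [← this]; module)
      simp only [sub_eq_zero] at this
      rw [this.1, this.2.1, this.2.2]
    · rintro ⟨z, y, x⟩ _
      simp only [Finset.coe_filter, Finset.mem_univ, true_and, Set.mem_ofPred_eq]
      exact Submodule.mem_span_triple.mpr ⟨x, y, z, rfl⟩
    · intro i hi hi2
      exfalso
      simp only [Finset.mem_filter, Finset.mem_univ, true_and] at hi
      obtain ⟨x, y, z, rfl⟩ := Submodule.mem_span_triple.mp hi
      exact hi2 ⟨(z, y, x), by simp, rfl⟩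
    · intro i _; rfl
  omega

theorem card_sub_pos : 0 < Fintype.card F - 1 := by
  have := Fintype.one_lt_card (α := F); omega

theorem nl_eq [Fintype E] {c : E → F} (hc : c ∈ Cd F E) {R b R' b' : E} (h : LI2 F R b)
    (h' : LI2 F R' b') (hs : Submodule.span F {R, b} = Submodule.span F {R', b'}) :
    nl c R b = nl c R' b' := by
  have h1 := line_count hc h
  rw [hs, line_count hc h'] at h1
  exact (Nat.eq_of_mul_eq_mul_left card_sub_pos h1).symm

theorem pl_eq [Fintype E] {c : E → F} (hc : c ∈ Cd F E) {R b a R' b' a' : E} (h : LI3 F R b a)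
    (h' : LI3 F R' b' a')
    (hs : Submodule.span F {R, b, a} = Submodule.span F {R', b', a'}) :
    pl c R b a = pl c R' b' a' := by
  have h1 := plane_count hc h
  rw [hs, plane_count hc h'] at h1
  exact (Nat.eq_of_mul_eq_mul_left card_sub_pos h1).symm

theorem HL2 {c : E → F} (hc : c ∈ Cd F E) (R b a : E)
    (hk2 : 2 * sN c R b ≤ Fintype.card F) :
    (sN c R b : ℤ) * (Fintype.card F + 2 - sN c R b) + iv c R ≤ pl c R b a := by
  have h := HL hc R a b _ rfl hk2
  set k := sN c R b with hk
  have h1 : (∑ t : F, ((k : ℤ) - sN c R (a + t • b))) ≤ ((∑ t : F, (k - sN c R (a + t • b)) : ℕ) : ℤ) := by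
    push_cast
    refine Finset.sum_le_sum fun t _ => ?_
    omega
  have h2 : ((k * (k - 1) : ℕ) : ℤ) = (k : ℤ) * k - k := by
    rcases Nat.eq_zero_or_pos k with h0 | h0
    · simp [h0]
    · push_cast [Nat.cast_sub (show 1 ≤ k from h0)]; ring
  have h3 : ((∑ t : F, (k - sN c R (a + t • b)) : ℕ) : ℤ) ≤ (k : ℤ) * k - k := by
    rw [← h2]; exact_mod_cast h
  rw [Finset.sum_sub_distrib] at h1
  simp only [Finset.sum_const, Finset.card_univ, nsmul_eq_mul] at h1
  rw [pl, nl, ← hk]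
  push_cast
  nlinarith

/-- a 0/1 valued function -/
def Bin (c : E → F) : Prop := ∀ x, c x = 0 ∨ c x = 1

theorem iv_sub {c : E → F} (hb : Bin c) (φ : E →ₗ[F] F) (x : E) :
    iv (c - ind φ) x = if φ x = 0 then 1 - iv c x else iv c x := by
  rcases hb x with h | h <;> by_cases hφ : φ x = 0 <;> simp [iv, ind, h, hφ]

theorem iv_le (c : E → F) (x : E) : iv c x ≤ 1 := by unfold iv; split_ifs <;> simp

theorem sN_le (c : E → F) (R x : E) : sN c R x ≤ Fintype.card F := by
  unfold sN; exact Finset.card_le_univ _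

theorem sN_sub_in {c : E → F} (hb : Bin c) (φ : E →ₗ[F] F) {R b : E} (hR : φ R = 0) (h : φ b = 0) :
    sN (c - ind φ) R b = Fintype.card F - sN c R b := by
  have : sN (c - ind φ) R b + sN c R b = Fintype.card F := by
    rw [sN_eq, sN_eq, ← Finset.sum_add_distrib]
    rw [Finset.sum_congr rfl (g := fun _ => 1)]
    · simp
    · intro z _
      rw [iv_sub hb, if_pos (by simp [hR, h])]
      have := iv_le c (b + z • R); omega
  omega

theorem sN_sub_out {c : E → F} (hb : Bin c) (φ : E →ₗ[F] F) {R b : E} (hR : φ R = 0) (h : φ b ≠ 0) :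
    sN (c - ind φ) R b = sN c R b := by
  rw [sN_eq, sN_eq]
  refine Finset.sum_congr rfl fun z _ => ?_
  rw [iv_sub hb, if_neg (by simp [hR, h])]

theorem nl_sub_in {c : E → F} (hb : Bin c) (φ : E →ₗ[F] F) {R b : E} (hR : φ R = 0) (h : φ b = 0) :
    nl (c - ind φ) R b + nl c R b = Fintype.card F + 1 := by
  rw [nl, nl, sN_sub_in hb φ hR h, iv_sub hb, if_pos hR]
  have := iv_le c R
  have := sN_le c R b
  omega

theorem pl_sub {c : E → F} (hb : Bin c) (φ : E →ₗ[F] F) {R b a : E} (hR : φ R = 0) (h : φ b = 0)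
    (ha : φ a ≠ 0) :
    pl (c - ind φ) R b a + 2 * nl c R b = pl c R b a + Fintype.card F + 1 := by
  have h1 := nl_sub_in hb φ hR h
  have h2 : ∑ t : F, sN (c - ind φ) R (a + t • b) = ∑ t : F, sN c R (a + t • b) :=
    Finset.sum_congr rfl fun t _ => sN_sub_out hb φ hR (by simp [h, ha])
  rw [pl, pl, h2]
  omega

theorem LI3.notMem {u v w : E} (h : LI3 F u v w) : w ∉ Submodule.span F {u, v} := by
  intro hw
  obtain ⟨x, y, hxy⟩ := Submodule.mem_span_pair.mp hw
  have := h x y (-1) (by rw [hxy]; simp)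
  simp at this

theorem LI3.exists_dual {u v w : E} (h : LI3 F u v w) :
    ∃ φ : E →ₗ[F] F, φ u = 0 ∧ φ v = 0 ∧ φ w ≠ 0 := by
  obtain ⟨f, hf, hle⟩ := Submodule.exists_le_ker_of_notMem h.notMem
  exact ⟨f, hle (Submodule.subset_span (by simp)), hle (Submodule.subset_span (by simp)), hf⟩

/-- complementary version of `HL2` -/
theorem HL3 {c : E → F} (hc : c ∈ Cd F E) (hb : Bin c) {R b a : E} (h : LI3 F R b a) (hR : c R = 1)
    (β : ℕ) (hβ : nl c R b + β = Fintype.card F + 1) (h2 : 2 * β ≤ Fintype.card F) :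
    (β : ℤ) * (Fintype.card F + 2 - β) + (Fintype.card F + 1) ≤ pl c R b a + 2 * β := by
  obtain ⟨φ, h1, h3, h4⟩ := h.exists_dual
  have hc' : c - ind φ ∈ Cd F E := Submodule.sub_mem _ hc (ind_mem φ)
  have e1 := sN_sub_in hb φ h1 h3
  have e2 : iv c R = 1 := by simp [iv, hR]
  have e3 : sN (c - ind φ) R b = β := by
    rw [e1]; rw [nl, e2] at hβ; omega
  have e4 := HL2 hc' R b a (by rw [e3]; exact h2)
  rw [e3, iv_sub hb, if_pos h1, e2] at e4
  have e5 := pl_sub hb φ h1 h3 h4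
  zify at e5 hβ
  push_cast at e4
  linarith

end A2
end QH

namespace QH
open scoped Classical
set_option linter.unusedSectionVars false

section A3

theorem dvd_gap {p q y : ℤ} (hpq : p ∣ q) (hy : p ∣ y) (h : q - p < y) : q ≤ y := by
  obtain ⟨a, rfl⟩ := hpq
  obtain ⟨b, rfl⟩ := hy
  rcases le_or_gt p 0 with h0 | h0
  · have : 0 < p * (b - a + 1) := by linarith
    have h1 : b - a + 1 < 0 := by
      by_contra hc; push Not at hc
      nlinarith
    nlinarith
  · have : 0 < p * (b - a + 1) := by linarith
    have h1 : 0 < b - a + 1 := by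
      by_contra hc; push Not at hc
      nlinarith
    nlinarith

/-- the numerical part of `P1` when a very long line is present -/
theorem arithC (q β S2 Y' : ℤ) (hq : q = 5 ∨ 7 ≤ q) (h5 : q = 5 → (5 : ℤ) ∣ β) (hβ : 1 ≤ β)
    (h2 : 2 * β ≤ q ^ 2)
    (hY : β * (q ^ 2 + 1 - β) - 2 * q ^ 2 + 1 ≤ Y') (hS : 0 ≤ S2)
    (hCS : Y' ^ 2 ≤ (q ^ 2 - 1) * S2) :
    q ^ 4 - q ^ 3 + q ≤ (q ^ 2 - β) ^ 2 + S2 := by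
  have hq5 : 5 ≤ q := by omega
  rcases le_or_gt (2 * β) q with hA | hA
  · nlinarith [mul_nonneg (sub_nonneg.mpr hA) (show 0 ≤ 4 * q ^ 2 - 2 * β - q by nlinarith)]
  rcases le_or_gt (2 * q) β with hB | hB
  · have e1 : 2 * q ^ 3 - 6 * q ^ 2 + 2 * q + 1 ≤ Y' := by
      nlinarith [mul_nonneg (sub_nonneg.mpr hB) (show 0 ≤ q ^ 2 + 1 - 2 * q - β by nlinarith)]
    have e0 : 0 ≤ 2 * q ^ 3 - 6 * q ^ 2 + 2 * q + 1 := by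
      obtain ⟨n, rfl⟩ : ∃ n, q = n + 5 := ⟨q - 5, by ring⟩
      have : 0 ≤ n := by linarith
      ring_nf; positivity
    have e2 : (2 * q ^ 3 - 6 * q ^ 2 + 2 * q + 1) ^ 2 ≤ Y' ^ 2 := pow_le_pow_left₀ e0 e1 2
    have e3 : (q ^ 2 - 1) * (q ^ 4 - q ^ 3 + q) ≤ (2 * q ^ 3 - 6 * q ^ 2 + 2 * q + 1) ^ 2 := by
      obtain ⟨n, rfl⟩ : ∃ n, q = n + 5 := ⟨q - 5, by ring⟩
      have : 0 ≤ n := by linarith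
      rw [← sub_nonneg]
      ring_nf; positivity
    have e4 : q ^ 4 - q ^ 3 + q ≤ S2 := by
      have : (q ^ 2 - 1) * (q ^ 4 - q ^ 3 + q) ≤ (q ^ 2 - 1) * S2 := by linarith
      exact le_of_mul_le_mul_left this (by nlinarith)
    nlinarith [sq_nonneg (q ^ 2 - β)]
  rcases hq with rfl | hq7
  · obtain ⟨m, rfl⟩ := h5 rfl
    have : m = 1 := by omega
    subst this
    norm_num at *
    nlinarith
  · set f := β * (q - 1) ^ 2 - 2 * q ^ 2 + 1 with hf
    have e1 : f ≤ Y' := by nlinarith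
    have e0 : 0 ≤ f := by
      have : 0 ≤ (2 * β - q) * (q - 1) ^ 2 := by
        apply mul_nonneg <;> nlinarith
      have h3 : 0 ≤ q * (q - 1) ^ 2 - 4 * q ^ 2 + 2 := by
        obtain ⟨n, rfl⟩ : ∃ n, q = n + 7 := ⟨q - 7, by ring⟩
        have : 0 ≤ n := by linarith
        ring_nf; positivity
      nlinarith
    have e2 : f ^ 2 ≤ Y' ^ 2 := pow_le_pow_left₀ e0 e1 2
    have e3 : (q ^ 2 - 1) * ((2 * β - q) * q ^ 2 - β ^ 2 + q) ≤ f ^ 2 := by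
      set A := (q - 1) ^ 4 + q ^ 2 - 1 with hA'
      set B := (2 * q ^ 2 - 1) * (q - 1) ^ 2 + q ^ 2 * (q ^ 2 - 1) with hB'
      set C := (2 * q ^ 2 - 1) ^ 2 + (q ^ 2 - 1) * (q ^ 3 - q) with hC'
      have hApos : 0 < A := by nlinarith [sq_nonneg ((q - 1) ^ 2)]
      have hACB : 0 ≤ A * C - B ^ 2 := by
        rw [hA', hB', hC']
        obtain ⟨n, rfl⟩ : ∃ n, q = n + 7 := ⟨q - 7, by ring⟩
        have : 0 ≤ n := by linarith
        ring_nf; positivity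
      have hid : f ^ 2 - (q ^ 2 - 1) * ((2 * β - q) * q ^ 2 - β ^ 2 + q) =
          A * β ^ 2 - 2 * B * β + C := by
        rw [hf, hA', hB', hC']; ring
      have : 0 ≤ A * (A * β ^ 2 - 2 * B * β + C) := by
        nlinarith [sq_nonneg (A * β - B)]
      have := nonneg_of_mul_nonneg_right this hApos
      linarith
    have e4 : (2 * β - q) * q ^ 2 - β ^ 2 + q ≤ S2 := by
      have : (q ^ 2 - 1) * ((2 * β - q) * q ^ 2 - β ^ 2 + q) ≤ (q ^ 2 - 1) * S2 := by linarith
      exact le_of_mul_le_mul_left this (by nlinarith)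
    nlinarith

theorem arithP1 {ι : Type*} [Fintype ι] [Nonempty ι] (p q b : ℤ) (y : ι → ℤ)
    (hp : 2 ≤ p) (hpq : p ∣ q) (hq : q = 5 ∨ 7 ≤ q) (h5 : q = 5 → p = 5)
    (hcard : (Fintype.card ι : ℤ) = q ^ 2) (hy0 : ∀ t, 0 ≤ y t) (hyp : ∀ t, p ∣ y t)
    (hyQ : ∀ t, y t + 1 ≤ q ^ 2)
    (hb1 : 1 ≤ b) (hbq : b ≤ q)
    (hA : ∀ t, y t + 1 < q ^ 2 → 2 * (y t + 2) ≤ q ^ 2 →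
      (y t + 2) * (q ^ 2 - y t) ≤ b + ∑ s, y s + q ^ 2)
    (hB : ∀ t, 2 * (y t + 1) ≤ q ^ 2 → (y t + 1) * (q ^ 2 + 1 - y t) ≤ b + ∑ s, y s + q ^ 2 - 1)
    (hC : ∀ t, 2 * (q ^ 2 - y t) ≤ q ^ 2 →
      (q ^ 2 - y t) * (q ^ 2 + 2 - (q ^ 2 - y t)) + q ^ 2 + 1 ≤
        q ^ 2 + 1 - b + ∑ s, y s + q ^ 2 + 2 * (q ^ 2 - y t)) :
    q ^ 4 - q ^ 3 + q ≤ ∑ t, y t ^ 2 := by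
  have hq5 : 5 ≤ q := by omega
  obtain ⟨t, ht⟩ := Finite.exists_max y
  set Y := ∑ s, y s with hY
  have hYle : Y ≤ q ^ 2 * y t := by
    rw [← hcard, hY]
    calc ∑ s, y s ≤ ∑ _s : ι, y t := Finset.sum_le_sum fun s _ => ht s
      _ = _ := by simp
  have hple : p ≤ q := Int.le_of_dvd (by linarith) hpq
  -- the case of large Y
  have big : q ^ 3 - 3 * q ≤ Y → q ^ 4 - q ^ 3 + q ≤ ∑ t, y t ^ 2 := by
    intro hYb
    have h1 : 0 ≤ ∑ s, (y s - (q - p)) * (y s - q) := by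
      refine Finset.sum_nonneg fun s _ => ?_
      rcases le_or_gt (y s) (q - p) with h | h
      · exact mul_nonneg_of_nonpos_of_nonpos (by linarith) (by linarith)
      · have := dvd_gap hpq (hyp s) h
        exact mul_nonneg (by linarith) (by linarith)
    have h2 : ∑ s, (y s - (q - p)) * (y s - q) = ∑ s, y s ^ 2 - (2 * q - p) * Y + q ^ 2 * (q * (q - p)) := by
      rw [← hcard, hY, Finset.mul_sum]
      have : (Fintype.card ι : ℤ) * (q * (q - p)) = ∑ _s : ι, q * (q - p) := by simp
      rw [this, ← Finset.sum_sub_distrib, ← Finset.sum_add_distrib]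
      refine Finset.sum_congr rfl fun s _ => ?_
      ring
    have h3 : (2 * q - p) * (q ^ 3 - 3 * q) ≤ (2 * q - p) * Y :=
      mul_le_mul_of_nonneg_left hYb (by linarith)
    have h4 : 0 ≤ q * ((q - 1) * (q - 5)) :=
      mul_nonneg (by linarith) (mul_nonneg (by linarith) (by linarith))
    nlinarith
  rcases le_or_gt (y t) (q - p) with h | h
  · exfalso
    have h0 := hy0 t
    have := hA t (by nlinarith) (by nlinarith)
    nlinarith
  have hm := dvd_gap hpq (hyp t) h
  rcases le_or_gt (2 * (y t + 2)) (q ^ 2) with h1 | h1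
  · apply big
    have := hA t (by nlinarith) h1
    have h6 : 0 ≤ (y t - q) * (q ^ 2 - q - y t - 2) :=
      mul_nonneg (by linarith) (by nlinarith)
    nlinarith
  rcases le_or_gt (2 * (y t + 1)) (q ^ 2) with h3 | h3
  · apply big
    have := hB t h3
    have h7 : 0 ≤ (2 * y t - (q ^ 2 - 3)) * (q ^ 2 - 2 - 2 * y t) :=
      mul_nonneg (by linarith) (by linarith)
    have h8 : 0 ≤ q * (q ^ 3 - 4 * q ^ 2 - q + 8) :=
      mul_nonneg (by linarith) (by nlinarith)
    nlinarith
  · have hb2 : 2 * (q ^ 2 - y t) ≤ q ^ 2 := by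
      by_contra hcon
      push Not at hcon
      have h9 : 2 * (q ^ 2 - y t) = q ^ 2 + 1 := by omega
      have : p ∣ 1 := by
        have e1 : p ∣ 2 * (q ^ 2 - y t) :=
          Dvd.dvd.mul_left (dvd_sub (dvd_pow hpq (by norm_num)) (hyp t)) 2
        rw [h9] at e1
        exact (Int.dvd_add_right (dvd_pow hpq (by norm_num))).mp e1
      have := Int.le_of_dvd one_pos this
      omega
    have h10 := hC t hb2
    have hsplit1 : y t + ∑ s ∈ Finset.univ.erase t, y s = Y := Finset.add_sum_erase _ _ (Finset.mem_univ t)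
    have hsplit2 : y t ^ 2 + ∑ s ∈ Finset.univ.erase t, y s ^ 2 = ∑ s, y s ^ 2 :=
      Finset.add_sum_erase _ (fun s => y s ^ 2) (Finset.mem_univ t)
    have hcs := sq_sum_le_card_mul_sum_sq (s := Finset.univ.erase t) (f := y)
    rw [Finset.card_erase_of_mem (Finset.mem_univ t), Finset.card_univ,
      Nat.cast_sub Fintype.card_pos, hcard] at hcs
    have hcs' : (∑ i ∈ Finset.univ.erase t, y i) ^ 2 ≤
        (q ^ 2 - 1) * ∑ i ∈ Finset.univ.erase t, y i ^ 2 := hcs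
    have := arithC q (q ^ 2 - y t) (∑ i ∈ Finset.univ.erase t, y i ^ 2)
      (∑ i ∈ Finset.univ.erase t, y i) hq (by
      intro h; rw [h] at hpq ⊢; rw [h5 h] at hyp
      exact dvd_sub (by norm_num) (hyp t)) (by linarith [hyQ t]) hb2
      (by nlinarith) (Finset.sum_nonneg fun s _ => sq_nonneg (y s)) hcs'
    rw [← hsplit2]
    calc _ ≤ _ := this
      _ = _ := by ring
end A3

section A3b
variable {F : Type*} [Field F] [Fintype F] {E : Type*} [AddCommGroup E] [Module F E]

theorem cast_sN {c : E → F} (hb : Bin c) (R w : E) : (sN c R w : F) = ∑ z : F, c (w + z • R) := by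
  rw [sN_eq]; push_cast
  refine Finset.sum_congr rfl fun z _ => ?_
  rcases hb (w + z • R) with h | h <;> simp [iv, h]

theorem cast_nl {c : E → F} (hc : c ∈ Cd F E) (hb : Bin c) (h0 : c 0 = 1) (R w : E) :
    (nl c R w : F) = 1 := by
  have h1 := Cd.line_sum hc R w
  rw [nl]; push_cast
  rw [cast_sN hb, ← h0, ← h1, add_comm]
  congr 1
  rcases hb R with h | h <;> simp [iv, h]

theorem nl_pos {c : E → F} (hc : c ∈ Cd F E) (hb : Bin c) (h0 : c 0 = 1) (R w : E) :
    1 ≤ nl c R w := by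
  have := cast_nl hc hb h0 R w
  by_contra hcon
  have h : nl c R w = 0 := by omega
  rw [h] at this
  simp at this

theorem nl_dvd (p : ℕ) [CharP F p] {c : E → F} (hc : c ∈ Cd F E) (hb : Bin c) (h0 : c 0 = 1) (R w : E) :
    (p : ℤ) ∣ (nl c R w : ℤ) - 1 := by
  rw [← CharP.intCast_eq_zero_iff F p]
  push_cast
  rw [cast_nl hc hb h0, sub_self]

theorem nl_swap [Fintype E] {c : E → F} (hc : c ∈ Cd F E) {u w : E} (h : LI2 F u w) (z : F) :
    nl c (w + z • u) u = nl c u w := by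
  apply nl_eq hc _ h
  · apply le_antisymm <;> rw [Submodule.span_le] <;> rintro x (rfl | rfl)
    · exact Submodule.mem_span_pair.mpr ⟨z, 1, by module⟩
    · exact Submodule.mem_span_pair.mpr ⟨1, 0, by module⟩
    · exact Submodule.mem_span_pair.mpr ⟨0, 1, by module⟩
    · exact Submodule.mem_span_pair.mpr ⟨1, -z, by module⟩
  · intro x y hxy
    obtain ⟨h1, h2⟩ := h (x * z + y) x (by rw [← hxy]; module)
    subst h2
    exact ⟨rfl, by simpa using h1⟩

theorem LI3.li2 {u v w : E} (h : LI3 F u v w) (t : F) : LI2 F u (w + t • v) := by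
  intro x y hxy
  have := h x (y * t) y (by rw [← hxy]; module)
  exact ⟨this.1, this.2.2⟩

theorem LI3.li2' {u v w : E} (h : LI3 F u v w) : LI2 F u v := by
  intro x y hxy
  have := h x y 0 (by rw [← hxy]; module)
  exact ⟨this.1, this.2.1⟩

theorem LI3.rot {u v w : E} (h : LI3 F u v w) (t z : F) : LI3 F (w + t • v + z • u) u v := by
  intro x y s hxy
  obtain ⟨h1, h2, h3⟩ := h (x * z + y) (x * t + s) x (by rw [← hxy]; module)
  subst h3
  exact ⟨rfl, by simpa using h1, by simpa using h2⟩

theorem pl_rot [Fintype E] {c : E → F} (hc : c ∈ Cd F E) {u v w : E} (h : LI3 F u v w) (t z : F) :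
    pl c (w + t • v + z • u) u v = pl c u v w := by
  apply pl_eq hc (h.rot t z) h
  apply le_antisymm <;> rw [Submodule.span_le] <;> rintro x (rfl | rfl | rfl)
  · exact Submodule.mem_span_triple.mpr ⟨z, t, 1, by module⟩
  · exact Submodule.mem_span_triple.mpr ⟨1, 0, 0, by module⟩
  · exact Submodule.mem_span_triple.mpr ⟨0, 1, 0, by module⟩
  · exact Submodule.mem_span_triple.mpr ⟨0, 1, 0, by module⟩
  · exact Submodule.mem_span_triple.mpr ⟨0, 0, 1, by module⟩
  · exact Submodule.mem_span_triple.mpr ⟨1, -z, -t, by module⟩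

theorem exists_zero_of_sN_lt {c : E → F} {R w : E} (h : sN c R w < Fintype.card F) :
    ∃ z : F, c (w + z • R) = 0 := by
  by_contra hcon
  push Not at hcon
  unfold sN at h
  rw [Finset.filter_true_of_mem (fun z _ => hcon z), Finset.card_univ] at h
  exact lt_irrefl _ h

theorem exists_ne_of_sN_pos {c : E → F} {R w : E} (h : 0 < sN c R w) :
    ∃ z : F, c (w + z • R) ≠ 0 := by
  unfold sN at h
  obtain ⟨z, hz⟩ := Finset.card_pos.mp h
  exact ⟨z, (Finset.mem_filter.mp hz).2⟩

theorem P1 [Fintype E] (p q : ℕ) [CharP F p] (hp : p.Prime) (hpq : p ∣ q) (hq4 : 4 < q) (hq6 : q ≠ 6)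
    (hQ : Fintype.card F = q ^ 2) {c : E → F} (hc : c ∈ Cd F E) (hb : Bin c) (h0 : c 0 = 1)
    {u v w : E} (h : LI3 F u v w) (hu : c u = 0) (b : ℕ) (hb1 : 1 ≤ b) (hbq : b ≤ q)
    (hN : sN c u v + b = Fintype.card F + 1) :
    (q : ℤ) ^ 4 - q ^ 3 + q ≤ ∑ t : F, ((sN c u (w + t • v) : ℤ) - 1) ^ 2 := by
  have hnl : ∀ x, nl c u x = sN c u x := fun x => by simp [nl, iv, hu]
  have hcard : (Fintype.card F : ℤ) = (q : ℤ) ^ 2 := by rw [hQ]; push_cast; rfl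
  have hsum : ∑ s : F, ((sN c u (w + s • v) : ℤ) - 1) = (∑ s : F, sN c u (w + s • v) : ℕ) - (q : ℤ) ^ 2 := by
    rw [Finset.sum_sub_distrib]; push_cast; simp [hcard]
  have hpl : (pl c u v w : ℤ) = (q : ℤ) ^ 2 + 1 - b + (∑ s : F, sN c u (w + s • v) : ℕ) := by
    rw [pl, hnl]; zify at hN; push_cast; linarith
  obtain ⟨φ, hφu, hφv, hφw⟩ := h.exists_dual
  have hc' : c - ind φ ∈ Cd F E := Submodule.sub_mem _ hc (ind_mem φ)
  have hpl' : (pl (c - ind φ) u v w : ℤ) = b + (∑ s : F, sN c u (w + s • v) : ℕ) := by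
    have := pl_sub hb φ hφu hφv hφw
    rw [hnl] at this
    zify at this hN
    push_cast at *
    linarith
  have hnl' : ∀ t : F, nl (c - ind φ) u (w + t • v) = sN c u (w + t • v) + 1 := by
    intro t
    rw [nl, sN_sub_out hb φ hφu (by simp [hφv, hφw]), iv_sub hb, if_pos hφu]
    simp [iv, hu]; ring
  apply arithP1 (p : ℤ) q b _ (by exact_mod_cast hp.two_le) (by exact_mod_cast hpq) (by omega)
    _ hcard
  · intro t
    have := nl_pos hc hb h0 u (w + t • v)
    rw [hnl] at this; omega
  · intro t
    have := nl_dvd p hc hb h0 u (w + t • v)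
    rwa [hnl] at this
  · intro t
    have := sN_le c u (w + t • v)
    zify at this
    linarith
  · exact_mod_cast hb1
  · exact_mod_cast hbq
  · intro t h1 h2
    rw [hsum]
    obtain ⟨z, hz⟩ := exists_zero_of_sN_lt (c := c) (R := u) (w := w + t • v) (by zify; linarith)
    have e1 := nl_swap hc' (h.li2 t) z
    rw [hnl'] at e1
    have hi : iv (c - ind φ) (w + t • v + z • u) = 0 := by
      rw [iv_sub hb, if_neg (by simp [hφu, hφv, hφw])]; simp [iv, hz]
    rw [nl, hi, zero_add] at e1
    have e2 := HL2 hc' (w + t • v + z • u) u v (by rw [e1]; zify; linarith)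
    rw [e1, hi, pl_rot hc' h, hpl', hcard] at e2
    push_cast at *
    linarith
  · intro t h2
    rw [hsum]
    have hpos : 0 < sN c u (w + t • v) := by
      have := nl_pos hc hb h0 u (w + t • v)
      rw [hnl] at this; omega
    obtain ⟨z, hz⟩ := exists_ne_of_sN_pos hpos
    have e1 := nl_swap hc' (h.li2 t) z
    rw [hnl'] at e1
    have hi : iv (c - ind φ) (w + t • v + z • u) = 1 := by
      rw [iv_sub hb, if_neg (by simp [hφu, hφv, hφw])]; simp [iv, hz]
    rw [nl, hi, add_comm, add_left_inj] at e1
    have e2 := HL2 hc' (w + t • v + z • u) u v (by rw [e1]; zify; linarith)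
    rw [e1, hi, pl_rot hc' h, hpl', hcard] at e2
    push_cast at *
    linarith
  · intro t h2
    rw [hsum]
    have hpos : 0 < sN c u (w + t • v) := by
      have := nl_pos hc hb h0 u (w + t • v)
      rw [hnl] at this; omega
    obtain ⟨z, hz⟩ := exists_ne_of_sN_pos hpos
    have hz1 : c (w + t • v + z • u) = 1 := (hb _).resolve_left hz
    have e1 := nl_swap hc (h.li2 t) z
    rw [hnl] at e1
    have hle := sN_le c u (w + t • v)
    have hcast : ((Fintype.card F + 1 - sN c u (w + t • v) : ℕ) : ℤ) = (q : ℤ) ^ 2 + 1 - sN c u (w + t • v) := by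
      rw [Nat.cast_sub (by omega)]; push_cast; rw [hcard]
    have e2 := HL3 hc hb (h.rot t z) hz1 (Fintype.card F + 1 - sN c u (w + t • v))
      (by rw [e1]; omega) (by zify; rw [hcast, hcard]; linarith)
    rw [hcast, pl_rot hc h, hpl, hcard] at e2
    push_cast at *
    linarith
  · intro h5
    have h5' : q = 5 := by exact_mod_cast h5
    rw [h5'] at hpq
    have := (Nat.prime_dvd_prime_iff_eq hp (by norm_num)).mp hpq
    exact_mod_cast this

end A3b
end QH

namespace QH
open scoped Classical
set_option linter.unusedSectionVars false

section A4
variable {F : Type*} [Field F] [Fintype F] {E : Type*} [AddCommGroup E] [Module F E] [Fintype E]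

noncomputable instance dualFintype : Fintype (E →ₗ[F] F) :=
  Fintype.ofInjective (fun φ : E →ₗ[F] F => (φ : E → F)) DFunLike.coe_injective

theorem card_ann (W : Submodule F E) :
    (Finset.univ.filter fun φ : E →ₗ[F] F => ∀ w ∈ W, φ w = 0).card =
      Fintype.card F ^ (finrank F E - finrank F W) := by
  have h1 := Subspace.finrank_add_finrank_dualAnnihilator_eq W
  have h2 : Nat.card W.dualAnnihilator = Nat.card F ^ finrank F W.dualAnnihilator :=
    Module.natCard_eq_pow_finrank (K := F) (V := W.dualAnnihilator)
  have h3 : Nat.card {φ : E →ₗ[F] F // ∀ w ∈ W, φ w = 0} = Nat.card W.dualAnnihilator :=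
    Nat.card_congr (Equiv.subtypeEquivRight fun φ => (Submodule.mem_dualAnnihilator φ).symm)
  rw [Nat.card_eq_fintype_card, Fintype.card_subtype, h2, Nat.card_eq_fintype_card] at h3
  rw [h3]
  congr 1
  omega

theorem finrank_span1 {u : E} (h : u ≠ 0) : finrank F (Submodule.span F {u}) = 1 :=
  finrank_span_singleton h

theorem LI2.finrank {u v : E} (h : LI2 F u v) : finrank F (Submodule.span F {u, v}) = 2 := by
  have : LinearIndependent F ![u, v] := LinearIndependent.pair_iff.mpr h
  have h2 := finrank_span_eq_card this
  have hr : Set.range ![u, v] = {u, v} := by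
    ext x; simp [eq_comm, or_comm]
  rw [hr] at h2
  simpa using h2

theorem LI3.finrank {u v w : E} (h : LI3 F u v w) : finrank F (Submodule.span F {u, v, w}) = 3 := by
  have : LinearIndependent F ![u, v, w] := by
    rw [Fintype.linearIndependent_iff]
    intro g hg
    simp only [Fin.sum_univ_three] at hg
    have := h _ _ _ hg
    intro i; fin_cases i
    · exact this.1
    · exact this.2.1
    · exact this.2.2
  have h2 := finrank_span_eq_card this
  have hr : Set.range ![u, v, w] = {u, v, w} := by
    ext x; simp [eq_comm]; tauto
  rw [hr] at h2
  simpa using h2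

theorem ann1 {u : E} (h : u ≠ 0) {n : ℕ} (hn : finrank F E = n + 1) :
    (Finset.univ.filter fun φ : E →ₗ[F] F => φ u = 0).card = Fintype.card F ^ n := by
  have := card_ann (Submodule.span F {u})
  rw [finrank_span1 h, hn] at this
  rw [← Nat.add_sub_cancel n 1, ← this]
  congr 1; ext φ
  simp only [Finset.mem_filter, Finset.mem_univ, true_and]
  constructor
  · intro hu w hw
    obtain ⟨x, rfl⟩ := Submodule.mem_span_singleton.mp hw
    simp [hu]
  · intro hw; exact hw u (Submodule.subset_span (by simp))

theorem ann2 {u v : E} (h : LI2 F u v) {n : ℕ} (hn : finrank F E = n + 2) :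
    (Finset.univ.filter fun φ : E →ₗ[F] F => φ u = 0 ∧ φ v = 0).card = Fintype.card F ^ n := by
  have := card_ann (Submodule.span F {u, v})
  rw [h.finrank, hn] at this
  rw [← Nat.add_sub_cancel n 2, ← this]
  congr 1; ext φ
  simp only [Finset.mem_filter, Finset.mem_univ, true_and]
  constructor
  · rintro ⟨hu, hv⟩ w hw
    obtain ⟨x, y, rfl⟩ := Submodule.mem_span_pair.mp hw
    simp [hu, hv]
  · intro hw; exact ⟨hw u (Submodule.subset_span (by simp)), hw v (Submodule.subset_span (by simp))⟩

theorem ann3 {u v w : E} (h : LI3 F u v w) {n : ℕ} (hn : finrank F E = n + 3) :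
    (Finset.univ.filter fun φ : E →ₗ[F] F => φ u = 0 ∧ φ v = 0 ∧ φ w = 0).card = Fintype.card F ^ n := by
  have := card_ann (Submodule.span F {u, v, w})
  rw [h.finrank, hn] at this
  rw [← Nat.add_sub_cancel n 3, ← this]
  congr 1; ext φ
  simp only [Finset.mem_filter, Finset.mem_univ, true_and]
  constructor
  · rintro ⟨hu, hv, hw⟩ x hx
    obtain ⟨x, y, z, rfl⟩ := Submodule.mem_span_triple.mp hx
    simp [hu, hv, hw]
  · intro hw; exact ⟨hw u (Submodule.subset_span (by simp)), hw v (Submodule.subset_span (by simp)),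
      hw w (Submodule.subset_span (by simp))⟩

theorem LI2.of_notMem {u w : E} (hu : u ≠ 0) (h : w ∉ Submodule.span F {u}) : LI2 F u w := by
  intro x y hxy
  have hy : y = 0 := by
    by_contra hy
    apply h
    refine Submodule.mem_span_singleton.mpr ⟨-(y⁻¹ * x), ?_⟩
    have : y • w = -(x • u) := by rw [eq_neg_iff_add_eq_zero, add_comm]; exact hxy
    calc -(y⁻¹ * x) • u = y⁻¹ • (-(x • u)) := by module
      _ = w := by rw [← this, smul_smul, inv_mul_cancel₀ hy, one_smul]
  subst hy
  refine ⟨?_, rfl⟩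
  simpa [hu] using hxy

theorem LI3.of_notMem {u v w : E} (hu : LI2 F u v) (h : w ∉ Submodule.span F {u, v}) : LI3 F u v w := by
  intro x y z hxy
  have hz : z = 0 := by
    by_contra hz
    apply h
    refine Submodule.mem_span_pair.mpr ⟨-(z⁻¹ * x), -(z⁻¹ * y), ?_⟩
    have : z • w = -(x • u + y • v) := by rw [eq_neg_iff_add_eq_zero, add_comm]; exact hxy
    calc -(z⁻¹ * x) • u + -(z⁻¹ * y) • v = z⁻¹ • (-(x • u + y • v)) := by module
      _ = w := by rw [← this, smul_smul, inv_mul_cancel₀ hz, one_smul]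
  subst hz
  have := hu x y (by simpa using hxy)
  exact ⟨this.1, this.2, rfl⟩

/-- the nonzero vectors in the support -/
noncomputable def Vh (c : E → F) : Finset E := Finset.univ.filter fun x : E => x ≠ 0 ∧ c x ≠ 0

theorem Sc_eq_sum (c : E → F) (L : Submodule F E) :
    Sc c L = ∑ x ∈ Vh c, if x ∈ L then 1 else 0 := by
  rw [Sc, Vh, ← Finset.card_filter, Finset.filter_filter]
  congr 1; ext x; simp; tauto

theorem Sc_top (c : E → F) : Sc c ⊤ = (Vh c).card := by
  rw [Sc_eq_sum]; simp

theorem Vh_li {c : E → F} (hc : c ∈ Cd F E) {u : E} (hu0 : u ≠ 0) (hu : c u = 0) {x : E} (hx : x ∈ Vh c) :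
    LI2 F u x := by
  apply LI2.of_notMem hu0
  intro h
  obtain ⟨a, rfl⟩ := Submodule.mem_span_singleton.mp h
  simp only [Vh, Finset.mem_filter, Finset.mem_univ, true_and] at hx
  have ha : a ≠ 0 := by rintro rfl; simp at hx
  rw [Cd.smul_inv hc ha] at hx
  exact hx.2 hu

theorem moment1 {c : E → F} (hc : c ∈ Cd F E) {u : E} (hu0 : u ≠ 0) (hu : c u = 0) {n : ℕ}
    (hn : finrank F E = n + 2) :
    ∑ φ ∈ Finset.univ.filter (fun φ : E →ₗ[F] F => φ u = 0), Sc c (LinearMap.ker φ) =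
      (Vh c).card * Fintype.card F ^ n := by
  simp only [Sc_eq_sum]
  rw [Finset.sum_comm, ← smul_eq_mul, ← Finset.sum_const]
  refine Finset.sum_congr rfl fun x hx => ?_
  rw [← ann2 (Vh_li hc hu0 hu hx) hn, ← Finset.card_filter, Finset.filter_filter]
  simp

theorem moment2 {c : E → F} (hc : c ∈ Cd F E) {u : E} (hu0 : u ≠ 0) (hu : c u = 0) {n : ℕ}
    (hn : finrank F E = n + 3) :
    (∑ φ ∈ Finset.univ.filter (fun φ : E →ₗ[F] F => φ u = 0), (Sc c (LinearMap.ker φ) : ℤ) ^ 2) =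
      (Vh c).card ^ 2 * (Fintype.card F : ℤ) ^ n +
      ((Fintype.card F : ℤ) ^ (n + 1) - (Fintype.card F : ℤ) ^ n) * ((Fintype.card F - 1) *
        ∑ x ∈ Vh c, (sN c u x : ℤ)) := by
  have h1 : ∀ φ : E →ₗ[F] F, (Sc c (LinearMap.ker φ) : ℤ) ^ 2 =
      ∑ x ∈ Vh c, ∑ x' ∈ Vh c, if φ x = 0 ∧ φ x' = 0 then 1 else 0 := by
    intro φ
    rw [Sc_eq_sum, sq]; push_cast
    rw [Finset.sum_mul_sum]
    refine Finset.sum_congr rfl fun x _ => Finset.sum_congr rfl fun x' _ => ?_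
    simp only [LinearMap.mem_ker]
    split_ifs <;> simp_all
  simp only [h1]
  rw [Finset.sum_comm]
  have h2 : ∀ x ∈ Vh c, ∑ φ ∈ Finset.univ.filter (fun φ : E →ₗ[F] F => φ u = 0), ∑ x' ∈ Vh c,
      (if φ x = 0 ∧ φ x' = 0 then 1 else 0 : ℤ) = (Vh c).card * (Fintype.card F : ℤ) ^ n +
      ((Fintype.card F : ℤ) ^ (n + 1) - (Fintype.card F : ℤ) ^ n) * ((Fintype.card F - 1) * sN c u x) := by
    intro x hx
    rw [Finset.sum_comm]
    have hli := Vh_li hc hu0 hu hx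
    have h3 : ∀ x' ∈ Vh c, ∑ φ ∈ Finset.univ.filter (fun φ : E →ₗ[F] F => φ u = 0),
        (if φ x = 0 ∧ φ x' = 0 then 1 else 0 : ℤ) = (Fintype.card F : ℤ) ^ n +
        ((Fintype.card F : ℤ) ^ (n + 1) - (Fintype.card F : ℤ) ^ n) * (if x' ∈ Submodule.span F {u, x} then 1 else 0 : ℕ) := by
      intro x' hx'
      have e1 : ∑ φ ∈ Finset.univ.filter (fun φ : E →ₗ[F] F => φ u = 0),
        (if φ x = 0 ∧ φ x' = 0 then 1 else 0 : ℤ) =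
          ((Finset.univ.filter fun φ : E →ₗ[F] F => φ u = 0 ∧ φ x = 0 ∧ φ x' = 0).card : ℤ) := by
        rw [← Finset.filter_filter, Finset.card_filter (p := fun φ : E →ₗ[F] F => φ x = 0 ∧ φ x' = 0)]
        push_cast; rfl
      rw [e1]
      split_ifs with hm
      · have e2 : (Finset.univ.filter fun φ : E →ₗ[F] F => φ u = 0 ∧ φ x = 0 ∧ φ x' = 0) =
          Finset.univ.filter fun φ : E →ₗ[F] F => φ u = 0 ∧ φ x = 0 := by
          ext φ
          simp only [Finset.mem_filter, Finset.mem_univ, true_and]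
          constructor
          · tauto
          · rintro ⟨h1, h2⟩
            obtain ⟨s, t, rfl⟩ := Submodule.mem_span_pair.mp hm
            simp [h1, h2]
        rw [e2, ann2 hli (n := n + 1) (by omega)]
        push_cast; ring
      · rw [ann3 (LI3.of_notMem hli hm) hn]
        push_cast; ring
    rw [Finset.sum_congr rfl h3, Finset.sum_add_distrib, ← Finset.mul_sum, ← Nat.cast_sum,
      ← Sc_eq_sum, line_count hc hli]
    have : iv c u = 0 := by simp [iv, hu]
    rw [nl, this, zero_add]
    push_cast [Nat.cast_sub (Fintype.card_pos (α := F))]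
    simp
  rw [Finset.sum_congr rfl h2, Finset.sum_add_distrib, Finset.sum_const, ← Finset.mul_sum, ← Finset.mul_sum, nsmul_eq_mul]
  ring

theorem sN_shift (c : E → F) (u w : E) (t : F) : sN c u (w + t • u) = sN c u w := by
  rw [sN_eq, sN_eq]
  conv_rhs => rw [← Equiv.sum_comp (Equiv.addLeft t)]
  refine Finset.sum_congr rfl fun z _ => ?_
  congr 1
  simp only [Equiv.coe_addLeft, add_smul, add_assoc]

theorem sN_mul (c : E → F) (u : E) (ha : c u = 0) (hc : c ∈ Cd F E) (h0 : c 0 = 1) :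
    sN c u 0 = 1 := by
  rw [sN_eq, Finset.sum_eq_single 0]
  · simp [iv, h0]
  · intro z _ hz
    simp [iv, Cd.smul_inv hc hz, ha]
  · simp

/-- sum over all shifts -/
theorem sum_shift (g : E → ℤ) (u : E) (t : F) : ∑ w : E, g (w + t • u) = ∑ w : E, g w :=
  Equiv.sum_comp (Equiv.addRight (t • u)) g

theorem sum_iv (c : E → F) (h0 : c 0 = 1) (g : E → ℤ) :
    ∑ w : E, (iv c w : ℤ) * g w = g 0 + ∑ x ∈ Vh c, g x := by
  have : insert (0 : E) (Vh c) = Finset.univ.filter fun x => c x ≠ 0 := by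
    ext x
    simp only [Vh, Finset.mem_insert, Finset.mem_filter, Finset.mem_univ, true_and]
    by_cases hx : x = 0
    · simp [hx, h0]
    · simp [hx]
  rw [← Finset.sum_insert (by simp [Vh]), this, Finset.sum_filter]
  refine Finset.sum_congr rfl fun x _ => ?_
  simp only [iv]; split_ifs <;> simp

theorem sum_N (c : E → F) (h0 : c 0 = 1) (u : E) :
    ∑ w : E, (sN c u w : ℤ) = Fintype.card F * (1 + (Vh c).card) := by
  simp only [sN_eq]; push_cast
  rw [Finset.sum_comm]
  simp only [sum_shift (fun w => (iv c w : ℤ))]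
  have := sum_iv c h0 (fun _ => 1)
  simp only [mul_one] at this
  rw [this]; simp

theorem sum_N2 {c : E → F} (hc : c ∈ Cd F E) (h0 : c 0 = 1) {u : E} (hu : c u = 0) :
    ∑ w : E, (sN c u w : ℤ) ^ 2 = Fintype.card F * (1 + ∑ x ∈ Vh c, (sN c u x : ℤ)) := by
  have h1 : ∀ w : E, (sN c u w : ℤ) ^ 2 = ∑ z : F, (iv c (w + z • u) : ℤ) * (sN c u (w + z • u) : ℤ) := by
    intro w
    simp only [sN_shift]
    rw [← Finset.sum_mul, sq]
    conv_lhs => rw [sN_eq]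
    push_cast
    rw [sN_eq]; push_cast; rfl
  simp only [h1]
  rw [Finset.sum_comm]
  simp only [sum_shift (fun w => (iv c w : ℤ) * (sN c u w : ℤ))]
  rw [sum_iv c h0 (fun w => (sN c u w : ℤ)), sN_mul c u hu hc h0]
  simp

theorem sum_D {c : E → F} (hc : c ∈ Cd F E) (h0 : c 0 = 1) {u : E} (hu0 : u ≠ 0) (hu : c u = 0)
    (q m : ℕ) (hq : 2 ≤ q) (hQ : Fintype.card F = q ^ 2) (ε : ℤ) (hε : ε = 1 ∨ ε = -1)
    (hE : finrank F E = m + 3)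
    (hV : (Sc c ⊤ : ℤ) = ((q : ℤ) ^ 3 * q ^ m + ε) * ((q : ℤ) ^ 2 * q ^ m - ε))
    (hS : ∀ φ : E →ₗ[F] F, φ ≠ 0 → (Sc c (LinearMap.ker φ) : ℤ) =
        ((q : ℤ) ^ 2 * q ^ m - ε) * (q * q ^ m + ε) ∨
      (Sc c (LinearMap.ker φ) : ℤ) = (q : ℤ) ^ 2 - 1 + q ^ 2 * ((q * q ^ m + ε) * (q ^ m - ε))) :
    ∑ w : E, ((sN c u w : ℤ) - 1) ^ 2 = (q : ℤ) ^ 3 * (q - 1) * ((q ^ 2 * q ^ m) ^ 2 - ε * (q ^ 2 * q ^ m)) := by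
  set d : ℤ := (q : ℤ) ^ m with hd
  have hcard : (Fintype.card F : ℤ) = (q : ℤ) ^ 2 := by rw [hQ]; push_cast; rfl
  have hQm : ((q : ℤ) ^ 2) ^ m = d ^ 2 := by rw [hd, ← pow_mul, ← pow_mul, mul_comm]
  set S1 : ℤ := ((q : ℤ) ^ 2 * d - ε) * (q * d + ε) with hS1
  set S2 : ℤ := (q : ℤ) ^ 2 - 1 + q ^ 2 * ((q * d + ε) * (d - ε)) with hS2
  have M0 := ann1 hu0 (n := m + 2) hE
  have M1 := moment1 hc hu0 hu (n := m + 1) (by omega)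
  have M2 := moment2 hc hu0 hu hE
  set Z := ∑ x ∈ Vh c, (sN c u x : ℤ) with hZ
  set Φ := Finset.univ.filter (fun φ : E →ₗ[F] F => φ u = 0) with hΦ
  have hv := hV
  rw [Sc_top] at hv
  set v : ℤ := ((Vh c).card : ℤ) with hvdef
  have e1 : ∑ φ ∈ Φ, ((Sc c (LinearMap.ker φ) : ℤ) - S1) * ((Sc c (LinearMap.ker φ) : ℤ) - S2) =
      (v - S1) * (v - S2) := by
    rw [Finset.sum_eq_single_of_mem (0 : E →ₗ[F] F)]
    · rw [LinearMap.ker_zero, Sc_top]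
    · simp [hΦ]
    · intro φ _ hφ
      rcases hS φ hφ with h | h <;> rw [h] <;> ring
  have e2 : ∑ φ ∈ Φ, ((Sc c (LinearMap.ker φ) : ℤ) - S1) * ((Sc c (LinearMap.ker φ) : ℤ) - S2) =
      ∑ φ ∈ Φ, (Sc c (LinearMap.ker φ) : ℤ) ^ 2 - (S1 + S2) * ∑ φ ∈ Φ, (Sc c (LinearMap.ker φ) : ℤ)
        + S1 * S2 * Φ.card := by
    rw [Finset.mul_sum, ← Finset.sum_sub_distrib]
    have : S1 * S2 * Φ.card = ∑ φ ∈ Φ, S1 * S2 := by simp [mul_comm]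
    rw [this, ← Finset.sum_add_distrib]
    refine Finset.sum_congr rfl fun φ _ => by ring
  zify at M0 M1
  rw [← hvdef] at M1
  rw [e1, M0, M1, M2, hcard] at e2
  simp only [pow_add, hQm] at e2
  have hD : ∑ w : E, ((sN c u w : ℤ) - 1) ^ 2 = q ^ 2 * Z - 2 * q ^ 2 * v - q ^ 2 + q ^ 6 * d ^ 2 := by
    have h1 : ∀ w : E, ((sN c u w : ℤ) - 1) ^ 2 = (sN c u w : ℤ) ^ 2 - 2 * sN c u w + 1 := fun w => by ring
    simp only [h1]
    rw [Finset.sum_add_distrib, Finset.sum_sub_distrib, ← Finset.mul_sum, sum_N2 hc h0 hu, sum_N c h0]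
    have : (Fintype.card E : ℤ) = q ^ 6 * d ^ 2 := by
      rw [Module.card_eq_pow_finrank (K := F), hE]; push_cast; rw [hcard, pow_add, hQm]; ring
    simp only [Finset.sum_const, Finset.card_univ, nsmul_eq_mul, this, hcard]
    rw [← hZ, ← hvdef]
    ring
  rw [hD]
  have hdpos : 0 < d := by positivity
  have hq2 : (2 : ℤ) ≤ q := by exact_mod_cast hq
  have hne : ((q : ℤ) ^ 2 - 1) ^ 2 * d ^ 2 ≠ 0 := by
    apply mul_ne_zero
    · apply pow_ne_zero; nlinarith
    · positivity
  apply mul_left_cancel₀ hne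
  rw [hS1, hS2, hv] at e2
  rw [hv]
  rcases hε with rfl | rfl
  · linear_combination (-(q : ℤ) ^ 2) * e2
  · linear_combination (-(q : ℤ) ^ 2) * e2

theorem sum_outside (g : E → ℤ) (hg : ∀ w, 0 ≤ g w) (L : Submodule F E) (v : E) :
    ∑ w ∈ Finset.univ.filter (fun w : E => w ∉ L), ∑ t : F, g (w + t • v) ≤
      Fintype.card F * ∑ w : E, g w := by
  calc _ ≤ ∑ w : E, ∑ t : F, g (w + t • v) :=
        Finset.sum_le_sum_of_subset_of_nonneg (Finset.filter_subset _ _)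
          fun w _ _ => Finset.sum_nonneg fun t _ => hg _
    _ = _ := by
        rw [Finset.sum_comm]
        simp only [sum_shift]
        simp

theorem card_outside (L : Submodule F E) :
    ((Finset.univ.filter (fun w : E => w ∉ L)).card : ℤ) =
      (Fintype.card F : ℤ) ^ finrank F E - (Fintype.card F : ℤ) ^ finrank F L := by
  have h1 := Finset.card_filter_add_card_filter_not (s := (Finset.univ : Finset E)) (fun w => w ∈ L)
  rw [Finset.card_univ, Module.card_eq_pow_finrank (K := F), ← Fintype.card_subtype] at h1
  have h2 : Fintype.card {x // x ∈ L} = Fintype.card F ^ finrank F L := Module.card_eq_pow_finrank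
  rw [h2] at h1
  zify at h1
  linarith

/-- no line through a point outside `V` is nearly full -/
theorem no_long (p q m : ℕ) [CharP F p] (hp : p.Prime) (hpq : p ∣ q) (hq4 : 4 < q) (hq6 : q ≠ 6)
    (hm : 1 ≤ m)
    (hQ : Fintype.card F = q ^ 2) {c : E → F} (hc : c ∈ Cd F E) (hb : Bin c) (h0 : c 0 = 1)
    (ε : ℤ) (hε : ε = 1 ∨ ε = -1)
    (hE : finrank F E = m + 3)
    (hV : (Sc c ⊤ : ℤ) = ((q : ℤ) ^ 3 * q ^ m + ε) * ((q : ℤ) ^ 2 * q ^ m - ε))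
    (hS : ∀ φ : E →ₗ[F] F, φ ≠ 0 → (Sc c (LinearMap.ker φ) : ℤ) =
        ((q : ℤ) ^ 2 * q ^ m - ε) * (q * q ^ m + ε) ∨
      (Sc c (LinearMap.ker φ) : ℤ) = (q : ℤ) ^ 2 - 1 + q ^ 2 * ((q * q ^ m + ε) * (q ^ m - ε)))
    {u v : E} (huv : LI2 F u v) (hu : c u = 0) (b : ℕ) (hb1 : 1 ≤ b) (hbq : b ≤ q)
    (hN : sN c u v + b = Fintype.card F + 1) : False := by
  have hu0 : u ≠ 0 := by
    rintro rfl
    rw [h0] at hu; exact one_ne_zero hu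
  have hcard : (Fintype.card F : ℤ) = (q : ℤ) ^ 2 := by rw [hQ]; push_cast; rfl
  have hD := sum_D hc h0 hu0 hu q m (by omega) hQ ε hε hE hV hS
  set L := Submodule.span F {u, v} with hL
  have h1 := sum_outside (F := F) (fun w => ((sN c u w : ℤ) - 1) ^ 2) (fun w => sq_nonneg _) L v
  have h2 : ((Finset.univ.filter (fun w : E => w ∉ L)).card : ℤ) * ((q : ℤ) ^ 4 - q ^ 3 + q) ≤
      ∑ w ∈ Finset.univ.filter (fun w : E => w ∉ L), ∑ t : F, ((sN c u (w + t • v) : ℤ) - 1) ^ 2 := by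
    rw [← nsmul_eq_mul]
    refine Finset.card_nsmul_le_sum _ _ _ fun w hw => ?_
    exact P1 p q hp hpq hq4 hq6 hQ hc hb h0
      (LI3.of_notMem huv (Finset.mem_filter.mp hw).2) hu b hb1 hbq hN
  rw [card_outside, hL, huv.finrank, hE, hcard] at h2
  rw [hD, hcard] at h1
  have h3 := h2.trans h1
  set a : ℤ := (q : ℤ) ^ 2 * q ^ m with ha
  have e : ((q : ℤ) ^ 2) ^ (m + 3) = q ^ 2 * a ^ 2 := by
    rw [ha]; ring
  rw [e] at h3
  have hq : (5 : ℤ) ≤ q := by exact_mod_cast hq4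
  have haq : (q : ℤ) ^ 3 ≤ a := by
    rw [ha]
    calc (q : ℤ) ^ 3 = (q : ℤ) ^ 2 * (q : ℤ) ^ 1 := by ring
      _ ≤ (q : ℤ) ^ 2 * (q : ℤ) ^ m := by gcongr; linarith
  have h4 : (a ^ 2 - q ^ 2) * ((q : ℤ) ^ 4 - q ^ 3 + q) ≤ q ^ 3 * (q - 1) * (a ^ 2 - ε * a) := by
    have : 0 < (q : ℤ) ^ 2 := by positivity
    apply le_of_mul_le_mul_left _ this
    linarith
  have hapos : 0 < a := lt_of_lt_of_le (by positivity) haq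
  have h5 : (q : ℤ) ^ 3 * (q - 1) * (a ^ 2 - ε * a) ≤ q ^ 3 * (q - 1) * (a ^ 2 + a) := by
    apply mul_le_mul_of_nonneg_left
    · rcases hε with rfl | rfl <;> linarith
    · apply mul_nonneg (by positivity); linarith
  have h6 : 0 ≤ a * q * (a - q ^ 3) := mul_nonneg (by positivity) (by linarith)
  have h7 : 0 ≤ (q : ℤ) ^ 3 * (a - q ^ 3) := mul_nonneg (by positivity) (by linarith)
  have h8 : 0 < (q : ℤ) ^ 3 * (q ^ 2 - 1) := mul_pos (by positivity) (by nlinarith)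
  nlinarith

end A4
end QH

namespace QH
open scoped Classical
set_option linter.unusedSectionVars false

section A5
variable {F : Type*} [Field F] [Fintype F] {E : Type*} [AddCommGroup E] [Module F E] [Fintype E]

/-- the situation in the plane -/
structure PlaneHyp (p q : ℕ) (c : E → F) : Prop where
  hp : p.Prime
  hpq : p ∣ q
  hq4 : 4 < q
  hQ : Fintype.card F = q ^ 2
  hc : c ∈ Cd F E
  hb : Bin c
  h0 : c 0 = 1
  hE : finrank F E = 3
  hW : Sc c ⊤ = (Fintype.card F - 1) * (q ^ 3 + 1)
  nolong : ∀ u v : E, LI2 F u v → c u = 0 → ∀ b : ℕ, 1 ≤ b → b ≤ q →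
    sN c u v + b ≠ Fintype.card F + 1

theorem LI3.span_top (hE : Module.finrank F E = 3) {u v w : E} (h : LI3 F u v w) :
    Submodule.span F {u, v, w} = ⊤ :=
  Submodule.eq_top_of_finrank_eq (by rw [h.finrank, hE])

theorem exists_LI3 (hE : finrank F E = 3) {u v : E} (h : LI2 F u v) : ∃ w, LI3 F u v w := by
  by_contra hcon
  push Not at hcon
  have : Submodule.span F {u, v} = ⊤ := by
    rw [Submodule.eq_top_iff']
    intro w
    by_contra hw
    exact hcon w (LI3.of_notMem h hw)
  have h2 := h.finrank
  rw [this, finrank_top, hE] at h2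
  omega

theorem exists_basis2 {L : Submodule F E} (hL : finrank F L = 2) :
    ∃ u v, LI2 F u v ∧ L = Submodule.span F {u, v} := by
  have h1 : L ≠ ⊥ := by rintro rfl; simp at hL
  obtain ⟨u, huL, hu0⟩ := Submodule.exists_mem_ne_zero_of_ne_bot h1
  have h2 : ∃ v ∈ L, v ∉ Submodule.span F {u} := by
    by_contra hcon
    push Not at hcon
    have : finrank F L ≤ finrank F (Submodule.span F {u}) := Submodule.finrank_mono hcon
    rw [hL, finrank_span1 hu0] at this
    omega
  obtain ⟨v, hvL, hv⟩ := h2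
  have hli := LI2.of_notMem hu0 hv
  refine ⟨u, v, hli, ?_⟩
  symm
  apply Submodule.eq_of_le_of_finrank_eq
  · rw [Submodule.span_le]; rintro x (rfl | rfl) <;> assumption
  · rw [hli.finrank, hL]

theorem LI2.swap {u v : E} (h : LI2 F u v) (z : F) : LI2 F (v + z • u) u := by
  intro x y hxy
  obtain ⟨h1, h2⟩ := h (x * z + y) x (by rw [← hxy]; module)
  subst h2
  exact ⟨rfl, by simpa using h1⟩

theorem exists_off {c : E → F} (hc : c ∈ Cd F E) {u v : E} (h : LI2 F u v)
    (hn : nl c u v < Fintype.card F + 1) :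
    ∃ R b, LI2 F R b ∧ c R = 0 ∧ nl c R b = nl c u v := by
  by_cases hu : c u = 0
  · exact ⟨u, v, h, hu, rfl⟩
  · have : sN c u v < Fintype.card F := by
      have : iv c u = 1 := by simp [iv, hu]
      rw [nl, this] at hn; omega
    obtain ⟨z, hz⟩ := exists_zero_of_sN_lt this
    exact ⟨v + z • u, u, h.swap z, hz, nl_swap hc h z⟩

theorem exists_on {c : E → F} (hc : c ∈ Cd F E) (hb : Bin c) {u v : E} (h : LI2 F u v)
    (hn : 1 ≤ nl c u v) :
    ∃ R b, LI2 F R b ∧ c R = 1 ∧ nl c R b = nl c u v := by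
  by_cases hu : c u = 0
  · have : 0 < sN c u v := by
      have : iv c u = 0 := by simp [iv, hu]
      rw [nl, this] at hn; omega
    obtain ⟨z, hz⟩ := exists_ne_of_sN_pos this
    exact ⟨v + z • u, u, h.swap z, (hb _).resolve_left hz, nl_swap hc h z⟩
  · exact ⟨u, v, h, (hb _).resolve_left hu, rfl⟩

theorem pl_const (hE : finrank F E = 3) {c : E → F} (hc : c ∈ Cd F E) {R b a R' b' a' : E}
    (h : LI3 F R b a) (h' : LI3 F R' b' a') : pl c R b a = pl c R' b' a' :=
  pl_eq hc h h' (by rw [h.span_top hE, h'.span_top hE])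

theorem nl_le (c : E → F) (u v : E) : nl c u v ≤ Fintype.card F + 1 := by
  have := iv_le c u; have := sN_le c u v; rw [nl]; omega

variable {p q : ℕ} {c : E → F}

theorem PlaneHyp.pl (H : PlaneHyp p q c) {u v w : E} (h : LI3 F u v w) : QH.pl c u v w = q ^ 3 + 1 := by
  have h1 := plane_count H.hc h
  rw [h.span_top H.hE, H.hW] at h1
  exact (Nat.eq_of_mul_eq_mul_left card_sub_pos h1).symm

theorem PlaneHyp.step1 (H : PlaneHyp p q c) [CharP F p] {u v : E} (h : LI2 F u v) :
    nl c u v ≤ q + 1 ∨ nl c u v = Fintype.card F + 1 := by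
  have hcard : (Fintype.card F : ℤ) = (q : ℤ) ^ 2 := by rw [H.hQ]; push_cast; rfl
  have hq : (5 : ℤ) ≤ q := by exact_mod_cast H.hq4
  by_contra hcon
  push Not at hcon
  obtain ⟨hn1, hn2⟩ := hcon
  have hnle := nl_le c u v
  have hlt : nl c u v < Fintype.card F + 1 := lt_of_le_of_ne hnle hn2
  set n := nl c u v with hn
  obtain ⟨R, b, hR, hcR, hnR⟩ := exists_off H.hc h hlt
  have hsR : sN c R b = n := by rw [← hn] at hnR; rw [← hnR, nl]; simp [iv, hcR]
  rcases le_or_gt (2 * n) (Fintype.card F) with h2 | h2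
  · obtain ⟨a, ha⟩ := exists_LI3 H.hE hR
    have := HL2 H.hc R b a (by rw [hsR]; exact h2)
    rw [hsR, H.pl ha, hcard] at this
    zify at h2 hn1
    rw [hcard] at h2
    push_cast at this
    have e : 0 ≤ ((n : ℤ) - (q + 2)) * (q ^ 2 - q - n) := mul_nonneg (by linarith) (by nlinarith)
    have e2 : 0 ≤ (iv c R : ℤ) := by positivity
    nlinarith
  · obtain ⟨β, hβ⟩ : ∃ β, n + β = Fintype.card F + 1 := ⟨Fintype.card F + 1 - n, by omega⟩
    have hd := nl_dvd p H.hc H.hb H.h0 u v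
    rw [← hn] at hd
    have hpQ : (p : ℤ) ∣ (q : ℤ) ^ 2 := dvd_pow (by exact_mod_cast H.hpq) (by norm_num)
    have hpβ : (p : ℤ) ∣ β := by
      have : (β : ℤ) = q ^ 2 - (n - 1) := by zify at hβ; linarith
      rw [this]; exact dvd_sub hpQ hd
    have h2β : 2 * β ≤ Fintype.card F := by
      by_contra hc2
      have e : 2 * β = Fintype.card F + 1 := by omega
      zify at e
      have e3 : (p : ℤ) ∣ 1 := by
        have e1 : (p : ℤ) ∣ 2 * β := Dvd.dvd.mul_left hpβ 2
        rw [e, hcard] at e1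
        exact (Int.dvd_add_right hpQ).mp e1
      have := Int.le_of_dvd one_pos e3
      have := H.hp.two_le
      omega
    obtain ⟨R', b', hR', hcR', hnR'⟩ := exists_on H.hc H.hb h (by omega)
    obtain ⟨a', ha'⟩ := exists_LI3 H.hE hR'
    have := HL3 H.hc H.hb ha' hcR' β (by rw [hnR']; exact hβ) h2β
    rw [H.pl ha', hcard] at this
    push_cast at this
    have hβq : β ≤ q := by
      by_contra hcon
      push Not at hcon
      zify at hcon h2β
      rw [hcard] at h2β
      have e : 0 ≤ ((β : ℤ) - (q + 1)) * (q ^ 2 - q - 1 - β) := mul_nonneg (by linarith) (by nlinarith)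
      nlinarith
    exact H.nolong R b hR hcR β (by omega) hβq (by rw [hsR]; exact hβ)

theorem PlaneHyp.exists_off (H : PlaneHyp p q c) {u v : E} (h : LI2 F u v) :
    ∃ X, LI3 F u v X ∧ c X = 0 := by
  obtain ⟨w, hw⟩ := exists_LI3 H.hE h
  have hpl := H.pl hw
  by_contra hcon
  push Not at hcon
  have e1 : ∀ t : F, sN c u (w + t • v) = Fintype.card F := by
    intro t
    by_contra hlt
    obtain ⟨z, hz⟩ := exists_zero_of_sN_lt (lt_of_le_of_ne (sN_le c u (w + t • v)) hlt)
    refine hcon (w + t • v + z • u) ?_ hz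
    intro x y s hxy
    obtain ⟨h1, h2, h3⟩ := hw (x + s * z) (y + s * t) s (by rw [← hxy]; module)
    subst h3
    exact ⟨by simpa using h1, by simpa using h2, rfl⟩
  rw [QH.pl] at hpl
  simp only [e1, Finset.sum_const, Finset.card_univ, smul_eq_mul, H.hQ] at hpl
  have := H.hq4
  nlinarith [pow_pos (show 0 < q by omega) 3]

theorem PlaneHyp.step2 (H : PlaneHyp p q c) [CharP F p] {u v : E} (h : LI2 F u v) :
    nl c u v ≤ q + 1 := by
  rcases H.step1 h with h1 | hfull
  · exact h1
  exfalso
  have hcard : (Fintype.card F : ℤ) = (q : ℤ) ^ 2 := by rw [H.hQ]; push_cast; rfl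
  have hq : (5 : ℤ) ≤ q := by exact_mod_cast H.hq4
  obtain ⟨X, hX, hcX⟩ := H.exists_off h
  obtain ⟨φ, hφu, hφv, hφX⟩ := hX.exists_dual
  have hc' : c - ind φ ∈ Cd F E := Submodule.sub_mem _ H.hc (ind_mem φ)
  -- the full line
  have hcu : c u ≠ 0 := by
    intro h0
    rw [nl] at hfull
    have : iv c u = 0 := by simp [iv, h0]
    have := sN_le c u v
    omega
  have hcv : ∀ z : F, c (v + z • u) ≠ 0 := by
    intro z hz
    have hs : sN c u v = Fintype.card F := by
      rw [nl] at hfull; have := iv_le c u; have := sN_le c u v; omega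
    have : sN c u v < Fintype.card F := by
      unfold sN
      rw [← Finset.card_univ]
      exact Finset.card_lt_card (Finset.filter_ssubset.mpr ⟨z, Finset.mem_univ z, by simpa using hz⟩)
    omega
  have hpl' : ∀ {R b a : E}, LI3 F R b a → (QH.pl (c - ind φ) R b a : ℤ) = q ^ 3 - q ^ 2 := by
    intro R b a hli
    rw [pl_const H.hE hc' hli hX]
    have e := pl_sub H.hb φ hφu hφv hφX
    rw [hfull, H.pl hX] at e
    zify at e
    rw [hcard] at e
    linarith
  -- lines through X
  have key : ∀ b a : E, LI3 F X b a → φ b = 0 → c b ≠ 0 → (sN (c - ind φ) X b : ℤ) ≤ q - p := by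
    intro b a hli hφb hcb
    have hiX : iv c X = 0 := by simp [iv, hcX]
    have e1 : sN (c - ind φ) X b + 1 = nl c X b := by
      rw [nl, hiX, zero_add, sN_eq, sN_eq,
        ← Finset.add_sum_erase _ _ (Finset.mem_univ (0 : F)),
        ← Finset.add_sum_erase _ (fun z => iv c (b + z • X)) (Finset.mem_univ (0 : F))]
      have e2 : ∑ z ∈ Finset.univ.erase (0 : F), iv (c - ind φ) (b + z • X) =
          ∑ z ∈ Finset.univ.erase (0 : F), iv c (b + z • X) := by
        refine Finset.sum_congr rfl fun z hz => ?_
        have hz0 : z ≠ 0 := Finset.ne_of_mem_erase hz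
        rw [iv_sub H.hb, if_neg (by simp [hφb, hφX, hz0])]
      have hib : iv c b = 1 := by simp [iv, hcb]
      rw [e2]
      simp only [zero_smul, add_zero]
      rw [iv_sub H.hb, if_pos hφb, hib]
      omega
    have e3 : nl c X b ≤ q + 1 := by
      rcases H.step1 hli.li2' with h1 | h1
      · exact h1
      · exfalso
        rw [nl, hiX] at h1
        have := sN_le c X b
        omega
    by_contra hcon
    push Not at hcon
    have hd : (p : ℤ) ∣ (sN (c - ind φ) X b : ℤ) := by
      have := nl_dvd p H.hc H.hb H.h0 X b
      rw [← e1] at this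
      push_cast at this
      simpa using this
    have e4 := dvd_gap (by exact_mod_cast H.hpq) hd hcon
    have e5 : sN (c - ind φ) X b = q := by
      have : q ≤ sN (c - ind φ) X b := by exact_mod_cast e4
      omega
    have e6 := HL2 hc' X b a (by rw [e5, H.hQ]; have := H.hq4; nlinarith)
    rw [hpl' hli, e5, hcard] at e6
    have : 0 ≤ (iv (c - ind φ) X : ℤ) := by positivity
    nlinarith
  have hli : LI3 F X u v := by simpa using hX.rot 0 0
  have htot := hpl' hli
  have hiX' : iv (c - ind φ) X = 0 := by
    rw [iv_sub H.hb, if_neg hφX]; simp [iv, hcX]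
  rw [QH.pl, nl, hiX'] at htot
  have k1 := key u v hli hφu hcu
  have k2 : ∀ t : F, (sN (c - ind φ) X (v + t • u) : ℤ) ≤ q - p := by
    intro t
    refine key (v + t • u) u ?_ (by simp [hφu, hφv]) (hcv t)
    intro x y s hxy
    obtain ⟨h1, h2, h3⟩ := hli x (s + y * t) y (by rw [← hxy]; module)
    subst h3
    exact ⟨h1, rfl, by simpa using h2⟩
  have k3 : ∑ t : F, (sN (c - ind φ) X (v + t • u) : ℤ) ≤ q ^ 2 * (q - p) := by
    calc _ ≤ ∑ _t : F, ((q : ℤ) - p) := Finset.sum_le_sum fun t _ => k2 t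
      _ = _ := by simp [hcard]; ring
  push_cast at htot
  have hp2 : (2 : ℤ) ≤ p := by exact_mod_cast H.hp.two_le
  nlinarith

/-- all-line moments -/
theorem momentA (c : E → F) (hE : finrank F E = 3) :
    ∑ φ : E →ₗ[F] F, Sc c (LinearMap.ker φ) = (Vh c).card * Fintype.card F ^ 2 := by
  simp only [Sc_eq_sum]
  rw [Finset.sum_comm, ← smul_eq_mul, ← Finset.sum_const]
  refine Finset.sum_congr rfl fun x hx => ?_
  have hx0 : x ≠ 0 := by simp only [Vh, Finset.mem_filter] at hx; exact hx.2.1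
  rw [← ann1 hx0 hE, ← Finset.card_filter]
  simp

theorem point_count {c : E → F} (hc : c ∈ Cd F E) {x : E} (hx : x ∈ Vh c) :
    Sc c (Submodule.span F {x}) = Fintype.card F - 1 := by
  simp only [Vh, Finset.mem_filter, Finset.mem_univ, true_and] at hx
  rw [Sc, ← Finset.card_univ, ← Finset.card_erase_of_mem (Finset.mem_univ (0 : F))]
  symm
  apply Finset.card_bij (fun a _ => a • x)
  · intro a ha
    have ha0 := Finset.ne_of_mem_erase ha
    simp only [Finset.mem_filter, Finset.mem_univ, true_and]
    exact ⟨Submodule.mem_span_singleton.mpr ⟨a, rfl⟩, smul_ne_zero ha0 hx.1, by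
      rw [Cd.smul_inv hc ha0]; exact hx.2⟩
  · intro a _ b _ hab
    exact smul_left_injective F hx.1 hab
  · intro y hy
    simp only [Finset.mem_filter, Finset.mem_univ, true_and] at hy
    obtain ⟨a, rfl⟩ := Submodule.mem_span_singleton.mp hy.1
    exact ⟨a, by simp; rintro rfl; simp at hy, rfl⟩

theorem momentB {c : E → F} (hc : c ∈ Cd F E) (hE : finrank F E = 3) :
    (∑ φ : E →ₗ[F] F, (Sc c (LinearMap.ker φ) : ℤ) ^ 2) =
      (Vh c).card ^ 2 * (Fintype.card F : ℤ) +
      (Vh c).card * (((Fintype.card F : ℤ) ^ 2 - (Fintype.card F : ℤ)) * (Fintype.card F - 1)) := by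
  have h1 : ∀ φ : E →ₗ[F] F, (Sc c (LinearMap.ker φ) : ℤ) ^ 2 =
      ∑ x ∈ Vh c, ∑ x' ∈ Vh c, if φ x = 0 ∧ φ x' = 0 then 1 else 0 := by
    intro φ
    rw [Sc_eq_sum, sq]; push_cast
    rw [Finset.sum_mul_sum]
    refine Finset.sum_congr rfl fun x _ => Finset.sum_congr rfl fun x' _ => ?_
    simp only [LinearMap.mem_ker]
    split_ifs <;> simp_all
  simp only [h1]
  rw [Finset.sum_comm]
  have h2 : ∀ x ∈ Vh c, ∑ φ : E →ₗ[F] F, ∑ x' ∈ Vh c,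
      (if φ x = 0 ∧ φ x' = 0 then 1 else 0 : ℤ) = (Vh c).card * (Fintype.card F : ℤ) +
      ((Fintype.card F : ℤ) ^ 2 - (Fintype.card F : ℤ)) * (Fintype.card F - 1) := by
    intro x hx
    rw [Finset.sum_comm]
    have hx0 : x ≠ 0 := by simp only [Vh, Finset.mem_filter] at hx; exact hx.2.1
    have h3 : ∀ x' ∈ Vh c, ∑ φ : E →ₗ[F] F,
        (if φ x = 0 ∧ φ x' = 0 then 1 else 0 : ℤ) = (Fintype.card F : ℤ) +
        ((Fintype.card F : ℤ) ^ 2 - (Fintype.card F : ℤ)) * (if x' ∈ Submodule.span F {x} then 1 else 0 : ℕ) := by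
      intro x' hx'
      have e1 : ∑ φ : E →ₗ[F] F,
        (if φ x = 0 ∧ φ x' = 0 then 1 else 0 : ℤ) =
          ((Finset.univ.filter fun φ : E →ₗ[F] F => φ x = 0 ∧ φ x' = 0).card : ℤ) := by
        rw [Finset.card_filter]
        push_cast; rfl
      rw [e1]
      split_ifs with hm
      · have e2 : (Finset.univ.filter fun φ : E →ₗ[F] F => φ x = 0 ∧ φ x' = 0) =
          Finset.univ.filter fun φ : E →ₗ[F] F => φ x = 0 := by
          ext φ
          simp only [Finset.mem_filter, Finset.mem_univ, true_and]
          constructor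
          · tauto
          · intro h1
            obtain ⟨s, rfl⟩ := Submodule.mem_span_singleton.mp hm
            simp [h1]
        rw [e2, ann1 hx0 hE]
        push_cast; ring
      · rw [ann2 (LI2.of_notMem hx0 hm) (n := 1) hE]
        push_cast; ring
    rw [Finset.sum_congr rfl h3, Finset.sum_add_distrib, Finset.sum_const, ← Finset.mul_sum,
      ← Nat.cast_sum, ← Sc_eq_sum, point_count hc hx, nsmul_eq_mul,
      Nat.cast_sub (Fintype.card_pos (α := F))]
    push_cast
    rfl
  rw [Finset.sum_congr rfl h2, Finset.sum_const, nsmul_eq_mul]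
  ring

theorem finrank_ker_dual (hE : finrank F E = 3) {φ : E →ₗ[F] F} (hφ : φ ≠ 0) :
    finrank F (LinearMap.ker φ) = 2 := by
  have h1 := LinearMap.finrank_range_add_finrank_ker φ
  have h2 : LinearMap.range φ = ⊤ := LinearMap.range_eq_top.mpr (LinearMap.surjective hφ)
  rw [h2, finrank_top, finrank_self, hE] at h1
  omega

theorem PlaneHyp.unital (H : PlaneHyp p q c) [CharP F p] {u v : E} (h : LI2 F u v) :
    nl c u v = 1 ∨ nl c u v = q + 1 := by
  have hcard : (Fintype.card F : ℤ) = (q : ℤ) ^ 2 := by rw [H.hQ]; push_cast; rfl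
  have hq : (5 : ℤ) ≤ q := by exact_mod_cast H.hq4
  set f : (E →ₗ[F] F) → ℤ := fun φ => ((Sc c (LinearMap.ker φ) : ℤ) - (q ^ 2 - 1)) *
    ((Sc c (LinearMap.ker φ) : ℤ) - (q ^ 2 - 1) * (q + 1)) with hf
  have hcard1 : ((Fintype.card F - 1 : ℕ) : ℤ) = q ^ 2 - 1 := by
    rw [Nat.cast_sub (Fintype.card_pos (α := F)), hcard]; simp
  have hV : ((Vh c).card : ℤ) = (q ^ 2 - 1) * (q ^ 3 + 1) := by
    rw [← Sc_top, H.hW]; push_cast; rw [hcard1]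
  have mA := momentA c H.hE
  have mB := momentB H.hc H.hE
  zify at mA
  rw [hV, hcard] at mA mB
  have hDual : ((Finset.univ : Finset (E →ₗ[F] F)).card : ℤ) = q ^ 6 := by
    have := card_ann (⊥ : Submodule F E)
    rw [finrank_bot, H.hE, Finset.filter_true_of_mem (by
      intro φ _ w hw; rw [(Submodule.mem_bot F).mp hw, map_zero])] at this
    rw [this, H.hQ]; push_cast; ring
  have hsum : ∑ φ, f φ = (∑ φ : E →ₗ[F] F, (Sc c (LinearMap.ker φ) : ℤ) ^ 2) -
      ((q ^ 2 - 1) * (q + 2)) * (∑ φ : E →ₗ[F] F, (Sc c (LinearMap.ker φ) : ℤ)) +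
      q ^ 6 * ((q ^ 2 - 1) ^ 2 * (q + 1)) := by
    rw [← hDual, Finset.mul_sum, ← Finset.sum_sub_distrib, ← nsmul_eq_mul, ← Finset.sum_const,
      ← Finset.sum_add_distrib]
    refine Finset.sum_congr rfl fun φ _ => by rw [hf]; ring
  rw [mA, mB] at hsum
  have hf0 : f 0 = (q ^ 2 - 1) ^ 2 * (q ^ 3 * (q ^ 3 - q)) := by
    simp only [hf]
    rw [LinearMap.ker_zero, Sc_top, hV]; ring
  rw [← Finset.add_sum_erase _ _ (Finset.mem_univ (0 : E →ₗ[F] F)), hf0] at hsum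
  have hz : ∑ φ ∈ Finset.univ.erase (0 : E →ₗ[F] F), f φ = 0 := by
    linear_combination hsum
  have hfac : ∀ u v : E, LI2 F u v → ∀ φ : E →ₗ[F] F, LinearMap.ker φ = Submodule.span F {u, v} →
      f φ = (q ^ 2 - 1) ^ 2 * (((nl c u v : ℤ) - 1) * (nl c u v - (q + 1))) := by
    intro u v h φ hk
    simp only [hf]
    rw [hk, line_count H.hc h]; push_cast; rw [hcard1]; ring
  have hnp : ∀ φ ∈ Finset.univ.erase (0 : E →ₗ[F] F), f φ ≤ 0 := by
    intro φ hφ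
    obtain ⟨u, v, hli, hk⟩ := exists_basis2 (finrank_ker_dual H.hE (Finset.ne_of_mem_erase hφ))
    rw [hfac u v hli φ hk]
    have e1 : (1 : ℤ) ≤ nl c u v := by exact_mod_cast nl_pos H.hc H.hb H.h0 u v
    have e2 : (nl c u v : ℤ) ≤ q + 1 := by exact_mod_cast H.step2 hli
    exact mul_nonpos_of_nonneg_of_nonpos (sq_nonneg _)
      (mul_nonpos_of_nonneg_of_nonpos (by linarith) (by linarith))
  obtain ⟨w, hw⟩ := exists_LI3 H.hE h
  obtain ⟨φ, h1, h2, h3⟩ := hw.exists_dual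
  have hφ : φ ≠ 0 := by rintro rfl; simp at h3
  have hk : LinearMap.ker φ = Submodule.span F {u, v} := by
    symm
    apply Submodule.eq_of_le_of_finrank_eq
    · rw [Submodule.span_le]; rintro x (rfl | rfl) <;> assumption
    · rw [h.finrank, finrank_ker_dual H.hE hφ]
  have := (Finset.sum_eq_zero_iff_of_nonpos hnp).mp hz φ (by simp [hφ])
  rw [hfac u v h φ hk] at this
  have hne : ((q : ℤ) ^ 2 - 1) ^ 2 ≠ 0 := by apply pow_ne_zero; nlinarith
  rcases mul_eq_zero.mp ((mul_eq_zero.mp this).resolve_left hne) with h4 | h4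
  · left; omega
  · right; omega

end A5
end QH

namespace QH
open scoped Classical
set_option linter.unusedSectionVars false

section A6
variable {F : Type*} [Field F] [Fintype F] {E : Type*} [AddCommGroup E] [Module F E] [Fintype E]

open Polynomial in
/-- Vandermonde in finset form -/
theorem vander {ι : Type*} (S : Finset ι) (y v : ι → F) (hy : Set.InjOn y S)
    (h : ∀ l, l < S.card → ∑ s ∈ S, v s * y s ^ l = 0) : ∀ s ∈ S, v s = 0 := by
  intro s hs
  set f : F[X] := ∏ t ∈ S.erase s, (X - C (y t)) with hf
  have hdeg : f.natDegree < S.card := by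
    rw [hf, Polynomial.natDegree_prod_of_monic _ _ (fun t _ => monic_X_sub_C _)]
    simp only [natDegree_X_sub_C, Finset.sum_const, smul_eq_mul, mul_one]
    exact Finset.card_erase_lt_of_mem hs
  have h1 : ∑ t ∈ S, v t * f.eval (y t) = 0 := by
    simp only [Polynomial.eval_eq_sum_range' hdeg, Finset.mul_sum]
    rw [Finset.sum_comm]
    refine Finset.sum_eq_zero fun l hl => ?_
    have := h l (Finset.mem_range.mp hl)
    calc _ = f.coeff l * ∑ t ∈ S, v t * y t ^ l := by
          rw [Finset.mul_sum]; refine Finset.sum_congr rfl fun t _ => by ring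
      _ = 0 := by rw [this, mul_zero]
  rw [Finset.sum_eq_single_of_mem s hs] at h1
  · refine (mul_eq_zero.mp h1).resolve_right ?_
    rw [hf, eval_prod]
    refine Finset.prod_ne_zero_iff.mpr ?_
    intro t ht
    simp only [eval_sub, eval_X, eval_C]
    rw [sub_ne_zero]
    intro he
    exact Finset.ne_of_mem_erase ht (hy hs (Finset.mem_of_mem_erase ht) he).symm
  · intro t ht hts
    have : f.eval (y t) = 0 := by
      rw [hf, eval_prod]
      exact Finset.prod_eq_zero (Finset.mem_erase.mpr ⟨hts, ht⟩) (by simp)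
    rw [this, mul_zero]

open Polynomial in
theorem poly_van (l : (E →ₗ[F] F) →₀ F) (j : ℕ) (w1 w2 : E) (S : Finset F) (hS : j ≤ S.card)
    (h1 : (l.sum fun ψ a => a * (ψ w1) ^ j) = 0)
    (h2 : ∀ t ∈ S, (l.sum fun ψ a => a * (ψ (w2 + t • w1)) ^ j) = 0) (t : F) :
    (l.sum fun ψ a => a * (ψ (w2 + t • w1)) ^ j) = 0 := by
  set f : F[X] := ∑ ψ ∈ l.support, C (l ψ) * (C (ψ w1) * X + C (ψ w2)) ^ j with hf
  have hev : ∀ t, f.eval t = l.sum fun ψ a => a * (ψ (w2 + t • w1)) ^ j := by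
    intro t
    rw [hf, eval_finsetSum, Finsupp.sum]
    refine Finset.sum_congr rfl fun ψ _ => ?_
    simp; left; ring
  have hlin : ∀ ψ : E →ₗ[F] F, (C (ψ w1) * X + C (ψ w2)).natDegree ≤ 1 := fun ψ => natDegree_linear_le
  have hdeg : f.natDegree ≤ j := by
    refine natDegree_sum_le_of_forall_le _ _ fun ψ _ => ?_
    refine (natDegree_C_mul_le _ _).trans ((natDegree_pow_le).trans ?_)
    have := Nat.mul_le_mul_left j (hlin ψ)
    simpa using this
  have hco : f.coeff j = 0 := by
    rw [hf, finsetSum_coeff, ← h1, Finsupp.sum]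
    refine Finset.sum_congr rfl fun ψ _ => ?_
    rw [coeff_C_mul]
    have := coeff_pow_of_natDegree_le (m := j) (hlin ψ)
    rw [mul_one] at this
    rw [this]; simp
  have hf0 : f = 0 := by
    by_contra hne
    have hlt : f.natDegree < j := by
      refine lt_of_le_of_ne hdeg fun he => ?_
      rw [← he] at hco
      exact hne (leadingCoeff_eq_zero.mp hco)
    exact hne (eq_zero_of_natDegree_lt_card_of_eval_eq_zero' f S
      (fun t ht => by rw [hev]; exact h2 t ht) (by omega))
  rw [← hev, hf0, eval_zero]

variable {p q : ℕ} {c : E → F}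

/-- power sums -/
def P (c : E → F) (u : E) (j : ℕ) (w : E) : F := ∑ z : F, z ^ j * c (w + z • u)

noncomputable def Zs (c : E → F) (u w : E) : Finset F := Finset.univ.filter fun z => c (w + z • u) ≠ 0

theorem card_Zs (c : E → F) (u w : E) : (Zs c u w).card = sN c u w := by
  unfold Zs sN; rfl

theorem P_eq (hb : Bin c) (u w : E) (j : ℕ) : P c u j w = ∑ z ∈ Zs c u w, z ^ j := by
  rw [P, Zs, Finset.sum_filter]
  refine Finset.sum_congr rfl fun z _ => ?_
  rcases hb (w + z • u) with h | h <;> simp [h]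

theorem nl_off {u : E} (hu : c u = 0) (w : E) : nl c u w = sN c u w := by
  rw [nl]; simp [iv, hu]

theorem P_zero (H : PlaneHyp p q c) {u : E} (hu : c u = 0) (w : E) : P c u 0 w = 1 := by
  have := Cd.line_sum H.hc u w
  rw [hu, H.h0, add_zero] at this
  rw [P]; simpa using this

theorem tangent_foot (H : PlaneHyp p q c) {u w : E} (hu : c u = 0) (hn : nl c u w = 1)
    (h1 : P c u 1 w = 0) : Zs c u w = {0} := by
  rw [nl_off hu, ← card_Zs, Finset.card_eq_one] at hn
  obtain ⟨z, hz⟩ := hn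
  rw [P_eq H.hb, hz] at h1
  simp at h1
  rw [hz, h1]

theorem exists_LI2 (hE : finrank F E = 3) : ∃ u v : E, LI2 F u v := by
  have h1 : (⊤ : Submodule F E) ≠ ⊥ := by
    intro h; rw [← finrank_top F E, h, finrank_bot] at hE; omega
  obtain ⟨u, -, hu⟩ := Submodule.exists_mem_ne_zero_of_ne_bot h1
  by_contra hcon
  push Not at hcon
  have : Submodule.span F {u} = ⊤ := by
    rw [Submodule.eq_top_iff']
    intro w
    by_contra hw
    exact hcon u w (LI2.of_notMem hu hw)
  have h2 := finrank_span1 (F := F) hu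
  rw [this, finrank_top, hE] at h2
  omega

theorem LI3.of_ker {u w1 w2 : E} {Λ : E →ₗ[F] F} (hu : Λ u = -1) (h1 : Λ w1 = 0) (h2 : Λ w2 = 0)
    (h : LI2 F w1 w2) : LI3 F u w1 w2 := by
  intro x y s hxy
  have hx : x = 0 := by
    have := congrArg Λ hxy
    simpa [hu, h1, h2] using this
  subst hx
  obtain ⟨h3, h4⟩ := h y s (by simpa using hxy)
  exact ⟨rfl, h3, h4⟩

/-- the polar line and the tangents at a point off the unital -/
theorem PlaneHyp.center (H : PlaneHyp p q c) [CharP F p] {u : E} (hu : c u = 0) :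
    ∃ Λ : E →ₗ[F] F, ∃ w1 w2 : E, (∀ w, Λ w = P c u 1 w) ∧ Λ u = -1 ∧ Λ w1 = 0 ∧ Λ w2 = 0 ∧
      LI3 F u w1 w2 ∧ nl c u w1 = 1 ∧ (∃ t : F, nl c u (w2 + t • w1) = 1) ∧
      (∃ t : F, nl c u (w2 + t • w1) ≠ 1) ∧
      ∀ w, Λ w = 0 → ∀ j, 1 ≤ j → j ≤ q → P c u j w = 0 := by
  have hq4 := H.hq4
  have hQ := H.hQ
  obtain ⟨l, hl⟩ := Cd.psum H.hc u
  have hPl : ∀ j, j ≤ q → ∀ w, P c u j w = l.sum fun ψ a => a * (ψ w) ^ j := by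
    intro j hj w
    exact hl j (by rw [hQ]; nlinarith) w
  set Λ : E →ₗ[F] F := l.sum fun ψ a => a • ψ with hΛ
  have hΛP : ∀ w, Λ w = P c u 1 w := by
    intro w
    rw [hPl 1 (by omega), hΛ, Finsupp.sum, Finsupp.sum, LinearMap.sum_apply]
    simp
  have hshift : ∀ w y, P c u 1 (w + y • u) = P c u 1 w - y := by
    intro w y
    have h0 := P_zero H hu w
    have : P c u 1 (w + y • u) = ∑ z : F, (z - y) * c (w + z • u) := by
      rw [P]
      refine Fintype.sum_equiv (Equiv.addRight y) _ _ fun z => ?_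
      simp only [Equiv.coe_addRight, pow_one, add_sub_cancel_right]
      congr 2
      module
    rw [this]
    simp only [sub_mul, Finset.sum_sub_distrib]
    rw [← Finset.mul_sum]
    rw [P] at h0
    simp only [pow_zero, one_mul] at h0
    rw [h0, P]; simp
  have hΛu : Λ u = -1 := by
    have := hshift 0 1
    rw [← hΛP, ← hΛP] at this
    simpa using this
  have hΛ0 : Λ ≠ 0 := by intro h; rw [h] at hΛu; simp at hΛu
  obtain ⟨a, b, hab, hk⟩ := exists_basis2 (finrank_ker_dual H.hE hΛ0)
  have ha : Λ a = 0 := by rw [← LinearMap.mem_ker, hk]; exact Submodule.subset_span (by simp)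
  have hb : Λ b = 0 := by rw [← LinearMap.mem_ker, hk]; exact Submodule.subset_span (by simp)
  have hex : ∃ w1 w2, LI2 F w1 w2 ∧ Λ w1 = 0 ∧ Λ w2 = 0 ∧ nl c u w1 = 1 := by
    by_contra hcon
    push Not at hcon
    have k1 : nl c u a = q + 1 := (H.unital (LI3.li2' (LI3.of_ker hΛu ha hb hab))).resolve_left
      (hcon a b hab ha hb)
    have k2 : ∀ t : F, sN c u (b + t • a) = q + 1 := by
      intro t
      have hba : LI2 F (b + t • a) a := hab.swap t
      have e : Λ (b + t • a) = 0 := by simp [ha, hb]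
      rw [← nl_off hu]
      exact (H.unital (LI3.li2' (LI3.of_ker hΛu e ha hba))).resolve_left (hcon _ a hba e ha)
    have := H.pl (LI3.of_ker hΛu ha hb hab)
    rw [QH.pl, k1] at this
    simp only [k2, Finset.sum_const, Finset.card_univ, hQ, smul_eq_mul] at this
    nlinarith
  obtain ⟨w1, w2, hli, h1, h2, hn1⟩ := hex
  have hLI := LI3.of_ker hΛu h1 h2 hli
  set T : Finset F := Finset.univ.filter fun t => nl c u (w2 + t • w1) = 1 with hT
  have hcount : T.card = q := by
    have hpl := H.pl hLI
    rw [QH.pl, hn1] at hpl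
    have e : ∀ t : F, sN c u (w2 + t • w1) + q * (if t ∈ T then 1 else 0) = q + 1 := by
      intro t
      have hba : LI2 F (w2 + t • w1) w1 := hli.swap t
      have e : Λ (w2 + t • w1) = 0 := by simp [h1, h2]
      rw [← nl_off hu]
      have hm : t ∈ T ↔ nl c u (w2 + t • w1) = 1 := by simp [hT]
      rcases H.unital (LI3.li2' (LI3.of_ker hΛu e h1 hba)) with h | h
      · rw [if_pos (hm.mpr h), h]; ring
      · rw [if_neg (by rw [hm, h]; omega), h]; ring
    have e2 := Finset.sum_congr rfl fun t (_ : t ∈ (Finset.univ : Finset F)) => e t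
    rw [Finset.sum_add_distrib, ← Finset.mul_sum, Finset.sum_const, Finset.card_univ, hQ,
      smul_eq_mul] at e2
    have e3 : (∑ t : F, if t ∈ T then 1 else 0) = T.card := by simp
    rw [e3] at e2
    have e4 : q * T.card = q * q := by nlinarith
    exact Nat.eq_of_mul_eq_mul_left (by omega) e4
  have htan : ∀ w, Λ w = 0 → nl c u w = 1 → ∀ j, 1 ≤ j → P c u j w = 0 := by
    intro w hw hn j hj
    rw [P_eq H.hb, tangent_foot H hu hn (by rw [← hΛP, hw])]
    simp; omega
  refine ⟨Λ, w1, w2, hΛP, hΛu, h1, h2, hLI, hn1, ?_, ?_, ?_⟩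
  · have : T.Nonempty := by rw [← Finset.card_pos]; omega
    obtain ⟨t, ht⟩ := this
    exact ⟨t, by simpa [hT] using ht⟩
  · by_contra hcon
    push Not at hcon
    have : T = Finset.univ := by rw [hT]; ext t; simp [hcon t]
    rw [this, Finset.card_univ, hQ] at hcount
    nlinarith
  · intro w hw j hj1 hjq
    have hz1 := htan w1 h1 hn1 j hj1
    have hvan : ∀ t : F, P c u j (w2 + t • w1) = 0 := by
      intro t
      rw [hPl j hjq]
      refine poly_van l j w1 w2 T (by omega) (by rw [← hPl j hjq, hz1]) ?_ t
      intro t ht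
      rw [← hPl j hjq]
      exact htan _ (by simp [h1, h2]) (by simpa [hT] using ht) j hj1
    have hker : LinearMap.ker Λ = Submodule.span F {w1, w2} := by
      symm
      apply Submodule.eq_of_le_of_finrank_eq
      · rw [Submodule.span_le]; rintro x (rfl | rfl) <;> assumption
      · rw [hli.finrank, finrank_ker_dual H.hE hΛ0]
    have hw' : w ∈ Submodule.span F {w1, w2} := by rw [← hker]; exact hw
    obtain ⟨x, y, rfl⟩ := Submodule.mem_span_pair.mp hw'
    have hhom : ∀ (s : F) (v : E), P c u j (s • v) = s ^ j * P c u j v := by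
      intro s v
      rw [hPl j hjq, hPl j hjq, Finsupp.mul_sum]
      refine Finsupp.sum_congr fun ψ _ => ?_
      simp; ring
    by_cases hy : y = 0
    · subst hy
      rw [zero_smul, add_zero, hhom, hz1, mul_zero]
    · have : x • w1 + y • w2 = y • (w2 + (x / y) • w1) := by
        rw [smul_add, smul_smul, mul_div_cancel₀ _ hy, add_comm]
      rw [this, hhom, hvan, mul_zero]

end A6
end QH

namespace QH
open scoped Classical
set_option linter.unusedSectionVars false

section A7
variable {F : Type*} [Field F] [Fintype F] {E : Type*} [AddCommGroup E] [Module F E] [Fintype E]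

theorem quad_zero (S : Finset F) (hS : 3 ≤ S.card) (a b d : F)
    (h : ∀ z ∈ S, a * z ^ 2 + b * z + d = 0) : a = 0 ∧ b = 0 ∧ d = 0 := by
  have hd : (Polynomial.C a * Polynomial.X ^ 2 + Polynomial.C b * Polynomial.X +
      Polynomial.C d).natDegree ≤ 2 := Polynomial.natDegree_quadratic_le
  have h0 := Polynomial.eq_zero_of_natDegree_lt_card_of_eval_eq_zero' _ S
    (fun z hz => by simpa using h z hz) (lt_of_le_of_lt hd (by omega))
  have c0 := congrArg (fun f => Polynomial.coeff f 0) h0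
  have c1 := congrArg (fun f => Polynomial.coeff f 1) h0
  have c2 := congrArg (fun f => Polynomial.coeff f 2) h0
  simp [Polynomial.coeff_X, Polynomial.coeff_C] at c0 c1 c2
  exact ⟨c2, c1, c0⟩

theorem root_card (q : ℕ) (A : F) : (Finset.univ.filter fun z : F => z ^ (q + 1) = A).card ≤ q + 1 := by
  have h := Polynomial.card_nthRoots (q + 1) A
  refine le_trans ?_ h
  refine le_trans ?_ (Multiset.toFinset_card_le _)
  refine Finset.card_le_card fun z hz => ?_
  simp only [Finset.mem_filter] at hz
  rw [Multiset.mem_toFinset, Polynomial.mem_nthRoots (by omega)]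
  exact hz.2

variable {p q : ℕ} {c : E → F}

/-- the field-theoretic core -/
theorem core (p h q : ℕ) (hp : p.Prime) [CharP F p] (hq : q = p ^ h) (hq4 : 4 < q)
    (hQ : Fintype.card F = q ^ 2) (Z : Finset F) (hZ : Z.card = q + 1) (κ : F) (h0 : (0 : F) ∉ Z)
    (h1 : ∀ j, 1 ≤ j → j ≤ q → ∑ z ∈ Z, z ^ j = 0)
    (h2 : ∀ j, 1 ≤ j → j ≤ q → ∑ z ∈ Z, (z⁻¹ - κ) ^ j = 0) :
    ∃ A : F, A ≠ 0 ∧ A ^ q = A ∧ ∀ z ∈ Z, z ^ (q + 1) = A := by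
  have := Fact.mk hp
  have hh : h ≠ 0 := by rintro rfl; simp at hq; omega
  have hqF : (q : F) = 0 := by rw [hq]; push_cast; rw [CharP.cast_eq_zero]; simp [hh]
  have hne : ∀ z ∈ Z, z ≠ 0 := fun z hz h => h0 (h ▸ hz)
  have hc1 : ∑ z ∈ Z, (1 : F) = 1 := by simp [hZ, hqF]
  -- moments of the inverses
  have hm : ∀ l, l ≤ q → ∑ z ∈ Z, (z⁻¹) ^ l = κ ^ l := by
    intro l hl
    have e : ∀ z : F, (z⁻¹) ^ l = ∑ m ∈ Finset.range (l + 1),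
        (z⁻¹ - κ) ^ m * κ ^ (l - m) * (l.choose m) := by
      intro z
      rw [← add_pow]; simp
    simp only [e]
    rw [Finset.sum_comm, Finset.sum_eq_single_of_mem 0 (by simp)]
    · simp [hZ, hqF]
    · intro m hm hm0
      rw [← Finset.sum_mul, ← Finset.sum_mul, h2 m (by omega) (by
        have := Finset.mem_range.mp hm; omega)]
      simp
  have hsubq : ∀ a b : F, (a - b) ^ q = a ^ q - b ^ q := by
    intro a b; rw [hq]; exact sub_pow_char_pow a b h
  set D : F := ∑ z ∈ Z, (z⁻¹) ^ (q + 1) - κ ^ (q + 1) with hD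
  have hv := vander Z (fun z => z⁻¹) (fun z => D * z ^ q - (z⁻¹ - κ))
    (fun a _ b _ hab => inv_injective hab) (by
      intro l hl
      rw [hZ] at hl
      have e1 : ∑ z ∈ Z, (D * z ^ q - (z⁻¹ - κ)) * (z⁻¹) ^ l =
          D * ∑ z ∈ Z, z ^ (q - l) - (∑ z ∈ Z, (z⁻¹) ^ (l + 1) - κ * ∑ z ∈ Z, (z⁻¹) ^ l) := by
        rw [Finset.mul_sum, Finset.mul_sum, ← Finset.sum_sub_distrib, ← Finset.sum_sub_distrib]
        refine Finset.sum_congr rfl fun z hz => ?_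
        have : z ^ q * (z⁻¹) ^ l = z ^ (q - l) := by
          rw [inv_pow, ← div_eq_mul_inv, pow_sub₀ _ (hne z hz) (by omega), div_eq_mul_inv]
        rw [← this]; ring
      rw [e1, hm l (by omega)]
      rcases Nat.lt_or_ge l q with hlq | hlq
      · rw [h1 (q - l) (by omega) (by omega), hm (l + 1) (by omega)]; ring
      · have : l = q := by omega
        subst this
        simp only [Nat.sub_self, pow_zero]
        rw [hc1, hD]; ring)
  have hv1 : ∀ z ∈ Z, D * z ^ (q + 1) = 1 - κ * z := by
    intro z hz
    have := hv z hz
    have hz0 := hne z hz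
    calc D * z ^ (q + 1) = (D * z ^ q) * z := by ring
      _ = (z⁻¹ - κ) * z := by rw [sub_eq_zero.mp this]
      _ = _ := by field_simp
  have hD0 : D ≠ 0 := by
    intro hD0
    obtain ⟨a, ha, b, hb, hab⟩ := Finset.one_lt_card.mp (show 1 < Z.card by omega)
    have e1 := hv1 a ha
    have e2 := hv1 b hb
    rw [hD0, zero_mul] at e1 e2
    have hκ : κ ≠ 0 := by rintro rfl; simp at e1
    exact hab (mul_left_cancel₀ hκ (by linear_combination e1 - e2))
  have hquad : ∀ z ∈ Z, (-(D ^ q * κ)) * z ^ 2 + (D ^ q - D - κ ^ (q + 1)) * z + κ ^ q = 0 := by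
    intro z hz
    have e := hv1 z hz
    have hzq : z ^ (q * q) = z := by
      have := FiniteField.pow_card z
      rwa [hQ, sq] at this
    have e2 : D ^ q * (z * z ^ q) = 1 - κ ^ q * z ^ q := by
      have := congrArg (fun x => x ^ q) e
      simp only [mul_pow] at this
      rw [hsubq 1, one_pow, mul_pow] at this
      rw [← this]
      have : (z ^ (q + 1)) ^ q = z ^ (q * q) * z ^ q := by ring
      rw [this, hzq]
    have e3 : z ^ (q + 1) = z ^ q * z := pow_succ z q
    rw [e3] at e
    linear_combination (D * z) * e2 - (D ^ q * z + κ ^ q) * e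
  obtain ⟨a0, b0, d0⟩ := quad_zero Z (by omega) _ _ _ hquad
  have hκ : κ = 0 := by
    have hq0 : q ≠ 0 := by omega
    exact pow_eq_zero_iff hq0 |>.mp d0
  subst hκ
  have hDq : D ^ q = D := by
    rw [zero_pow (by omega)] at b0
    linear_combination b0
  refine ⟨D⁻¹, inv_ne_zero hD0, by rw [inv_pow, hDq], fun z hz => ?_⟩
  have := hv1 z hz
  rw [zero_mul, sub_zero] at this
  exact eq_inv_of_mul_eq_one_right this

theorem PlaneHyp.conic (H : PlaneHyp p q c) [CharP F p] {h : ℕ} (hq : q = p ^ h) {u : E}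
    (hu : c u = 0) {Λ : E →ₗ[F] F} (hΛ : ∀ w, Λ w = P c u 1 w) (hΛu : Λ u = -1)
    (hz : ∀ w, Λ w = 0 → ∀ j, 1 ≤ j → j ≤ q → P c u j w = 0) {w : E} (hw : Λ w = 0) :
    (P c u (q + 1) w) ^ q = P c u (q + 1) w ∧
    ∀ z : F, c (w + z • u) ≠ 0 ↔ z ^ (q + 1) = P c u (q + 1) w := by
  have hq4 := H.hq4
  by_cases hw0 : w = 0
  · subst hw0
    have hZ : Zs c u 0 = {0} := by
      ext z
      simp only [Zs, Finset.mem_filter, Finset.mem_univ, true_and, zero_add, Finset.mem_singleton]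
      by_cases hz0 : z = 0
      · subst hz0; simp [H.h0]
      · rw [Cd.smul_inv H.hc hz0]; simp [hu, hz0]
    rw [P_eq H.hb, hZ]
    simp only [Finset.sum_singleton]
    refine ⟨by rw [zero_pow (by omega), zero_pow (by omega)], fun z => ?_⟩
    have : c (0 + z • u) ≠ 0 ↔ z ∈ Zs c u 0 := by simp [Zs]
    rw [this, hZ, zero_pow (by omega)]
    simp
  have hmem : ∀ z, c (w + z • u) ≠ 0 ↔ z ∈ Zs c u w := by intro z; simp [Zs]
  have hli : LI2 F u w := by
    intro x y hxy
    have hx : x = 0 := by simpa [hΛu, hw] using congrArg Λ hxy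
    subst hx
    exact ⟨rfl, by simpa [hw0] using hxy⟩
  rcases H.unital hli with hn | hn
  · have hZ := tangent_foot H hu hn (by rw [← hΛ, hw])
    rw [P_eq H.hb, hZ]
    simp only [Finset.sum_singleton]
    refine ⟨by rw [zero_pow (by omega), zero_pow (by omega)], fun z => ?_⟩
    rw [hmem, hZ, zero_pow (by omega)]
    simp
  · have hcard : (Zs c u w).card = q + 1 := by rw [card_Zs, ← nl_off hu, hn]
    have h1 : ∀ j, 1 ≤ j → j ≤ q → ∑ z ∈ Zs c u w, z ^ j = 0 := by
      intro j hj1 hj2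
      rw [← P_eq H.hb]; exact hz w hw j hj1 hj2
    have h0 : (0 : F) ∉ Zs c u w := by
      intro hmem0
      have hc' : ((Zs c u w).erase 0).card = q := by
        rw [Finset.card_erase_of_mem hmem0, hcard]; rfl
      have hv := vander ((Zs c u w).erase 0) (fun z => z) (fun z => z) (fun a _ b _ hab => hab) (by
        intro l hl
        rw [hc'] at hl
        have := h1 (l + 1) (by omega) (by omega)
        rw [← Finset.add_sum_erase _ _ hmem0, zero_pow (by omega), zero_add] at this
        refine Eq.trans ?_ this
        exact Finset.sum_congr rfl fun z _ => by ring)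
      obtain ⟨z, hz'⟩ := Finset.card_pos.mp (show 0 < ((Zs c u w).erase 0).card by omega)
      exact Finset.ne_of_mem_erase hz' (hv z hz')
    have hcw : c w = 0 := by
      by_contra hcon
      exact h0 ((hmem 0).mp (by simpa using hcon))
    obtain ⟨Λ', -, -, -, hΛ'w, -, -, -, -, -, -, hz'⟩ := H.center hcw
    set κ := Λ' u with hκ
    have hK : Λ' (u + κ • w) = 0 := by simp [hΛ'w, ← hκ]
    have h2 : ∀ j, 1 ≤ j → j ≤ q → ∑ z ∈ Zs c u w, (z⁻¹ - κ) ^ j = 0 := by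
      intro j hj1 hj2
      rw [← hz' _ hK j hj1 hj2, P_eq H.hb]
      refine Finset.sum_bij (fun z _ => z⁻¹ - κ) ?_ ?_ ?_ ?_
      · intro z hzm
        have hz0 : z ≠ 0 := fun h => h0 (h ▸ hzm)
        simp only [Zs, Finset.mem_filter, Finset.mem_univ, true_and] at hzm ⊢
        have : u + κ • w + (z⁻¹ - κ) • w = z⁻¹ • (w + z • u) := by
          rw [smul_add, smul_smul, inv_mul_cancel₀ hz0]; module
        rw [this, Cd.smul_inv H.hc (inv_ne_zero hz0)]
        exact hzm
      · intro a _ b _ hab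
        exact inv_injective (sub_left_injective hab)
      · intro y hy
        simp only [Zs, Finset.mem_filter, Finset.mem_univ, true_and] at hy
        have e : u + κ • w + y • w = u + (κ + y) • w := by module
        rw [e] at hy
        have hs : κ + y ≠ 0 := by
          intro hs; rw [hs, zero_smul, add_zero] at hy; exact hy hu
        refine ⟨(κ + y)⁻¹, ?_, by rw [inv_inv]; ring⟩
        rw [← hmem]
        have e2 : w + (κ + y)⁻¹ • u = (κ + y)⁻¹ • (u + (κ + y) • w) := by
          rw [smul_add, smul_smul, inv_mul_cancel₀ hs]; module
        rw [e2, Cd.smul_inv H.hc (inv_ne_zero hs)]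
        exact hy
      · intro z _; rfl
    obtain ⟨A, hA0, hAq, hAZ⟩ := core p h q H.hp hq hq4 H.hQ (Zs c u w) hcard κ h0 h1 h2
    have hPA : P c u (q + 1) w = A := by
      have := Fact.mk H.hp
      have hqF : (q : F) = 0 := (CharP.cast_eq_zero_iff F p q).mpr H.hpq
      rw [P_eq H.hb, Finset.sum_congr rfl hAZ]
      simp [hcard, hqF]
    rw [hPA]
    refine ⟨hAq, fun z => ?_⟩
    have hsub : Zs c u w ⊆ Finset.univ.filter fun z : F => z ^ (q + 1) = A := by
      intro z hz; simp [hAZ z hz]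
    have heq := Finset.eq_of_subset_of_card_le hsub (by rw [hcard]; exact root_card q A)
    rw [hmem, heq]
    simp

theorem exists_pow_ne (hq4 : 4 < q) (hQ : Fintype.card F = q ^ 2) : ∃ x : F, x ^ q ≠ x := by
  by_contra hcon
  push Not at hcon
  have : (Fintype.card F - 1) ∣ (q - 1) := by
    rw [← FiniteField.forall_pow_eq_one_iff F]
    intro x
    have h1 := hcon x
    have h2 : (x : F) ^ (q - 1) * x = 1 * x := by
      rw [← pow_succ, Nat.sub_add_cancel (by omega), h1, one_mul]
    have := mul_right_cancel₀ x.ne_zero h2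
    exact Units.ext (by simpa using this)
  have := Nat.le_of_dvd (by omega) this
  rw [hQ] at this
  have : q ^ 2 ≤ q := by omega
  nlinarith

theorem PlaneHyp.main (H : PlaneHyp p q c) [CharP F p] {h : ℕ} (hq : q = p ^ h) :
    ∃ w1 w2 u : E, LI3 F w1 w2 u ∧ ∃ A : Matrix (Fin 3) (Fin 3) F, IsUnit A.det ∧
      Aᵀ = A.map (fun a => a ^ q) ∧ ∀ y : Fin 3 → F,
        c (y 0 • w1 + y 1 • w2 + y 2 • u) ≠ 0 ↔ ∑ i, ∑ j, y i * A i j * (y j) ^ q = 0 := by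
  have hq4 := H.hq4
  have := Fact.mk H.hp
  obtain ⟨x, y, hxy⟩ := exists_LI2 (F := F) H.hE
  obtain ⟨u, -, hu⟩ := H.exists_off hxy
  obtain ⟨Λ, w1, w2, hΛ, hΛu, hΛ1, hΛ2, hLI, hn1, ⟨t0, ht0⟩, ⟨t1, ht1⟩, hz⟩ := H.center hu
  have hcon := fun {w : E} (hw : Λ w = 0) => H.conic hq hu hΛ hΛu hz hw
  obtain ⟨l, hl⟩ := Cd.psum H.hc u
  have hB : ∀ w, P c u (q + 1) w = l.sum fun ψ a => a * (ψ w) ^ (q + 1) := by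
    intro w
    exact hl (q + 1) (by rw [H.hQ]; nlinarith) w
  set b : E → E → F := fun v v' => l.sum fun ψ a => a * (ψ v * (ψ v') ^ q) with hb
  have hadd : ∀ a b : F, (a + b) ^ q = a ^ q + b ^ q := by
    intro a b; rw [hq]; exact add_pow_char_pow a b p h
  have hform : ∀ x y : F, P c u (q + 1) (x • w1 + y • w2) =
      b w1 w1 * (x * x ^ q) + b w1 w2 * (x * y ^ q) + b w2 w1 * (y * x ^ q) +
        b w2 w2 * (y * y ^ q) := by
    intro x y
    rw [hB]
    simp only [hb, Finsupp.sum, Finset.sum_mul, ← Finset.sum_add_distrib]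
    refine Finset.sum_congr rfl fun ψ _ => ?_
    rw [map_add, map_smul, map_smul, pow_succ, hadd, smul_eq_mul, smul_eq_mul, mul_pow, mul_pow]
    ring
  have hK : ∀ x y : F, Λ (x • w1 + y • w2) = 0 := by intro x y; simp [hΛ1, hΛ2]
  have hfix : ∀ x y : F, (P c u (q + 1) (x • w1 + y • w2)) ^ q = P c u (q + 1) (x • w1 + y • w2) :=
    fun x y => (hcon (hK x y)).1
  have hqq : ∀ x : F, (x ^ q) ^ q = x := by
    intro x
    have := FiniteField.pow_card x
    rwa [H.hQ, sq, pow_mul] at this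
  have h1q : (1 : F) ^ q = 1 := one_pow q
  have h0q : (0 : F) ^ q = 0 := zero_pow (by omega)
  -- tangent w1
  have htan : ∀ w, Λ w = 0 → nl c u w = 1 → P c u (q + 1) w = 0 := by
    intro w hw hn
    rw [P_eq H.hb, tangent_foot H hu hn (by rw [← hΛ, hw])]
    simp
  have hb11 : b w1 w1 = 0 := by
    have e := htan w1 hΛ1 hn1
    have e2 := hform 1 0
    rw [one_smul, zero_smul, add_zero, e, h1q, h0q] at e2
    linear_combination -e2
  have hb22 : b w2 w2 ^ q = b w2 w2 := by
    have e1 := hfix 0 1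
    have e2 := hform 0 1
    rw [h0q, h1q] at e2
    have e3 : P c u (q + 1) ((0 : F) • w1 + (1 : F) • w2) = b w2 w2 := by
      rw [e2]; ring
    rwa [e3] at e1
  have hb12 : b w1 w2 = b w2 w1 ^ q := by
    have key : ∀ x : F, (b w1 w2 ^ q - b w2 w1) * x ^ q = (b w1 w2 - b w2 w1 ^ q) * x := by
      intro x
      have e1 := hfix x 1
      have e2 : P c u (q + 1) (x • w1 + (1 : F) • w2) =
          b w1 w2 * x + b w2 w1 * x ^ q + b w2 w2 := by
        rw [hform x 1, h1q, hb11]; ring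
      rw [e2, hadd, hadd, mul_pow, mul_pow, hqq, hb22] at e1
      linear_combination e1
    by_contra hne
    have k1 := key 1
    rw [h1q, mul_one, mul_one] at k1
    obtain ⟨x, hx⟩ := exists_pow_ne (F := F) hq4 H.hQ
    have k2 := key x
    rw [k1] at k2
    exact hx (mul_left_cancel₀ (sub_ne_zero.mpr hne) k2)
  have hb21 : b w2 w1 ≠ 0 := by
    intro h0
    rw [h0, h0q] at hb12
    have e : ∀ t : F, P c u (q + 1) (w2 + t • w1) = b w2 w2 := by
      intro t
      have := hform t 1
      rw [hb11, hb12, h0, h1q, one_smul, add_comm (t • w1)] at this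
      rw [this]; ring
    have e0 := htan (w2 + t0 • w1) (by simp [hΛ1, hΛ2]) ht0
    rw [e t0] at e0
    have e1 := e t1
    rw [e0] at e1
    have h3 := (hcon (w := w2 + t1 • w1) (by simp [hΛ1, hΛ2])).2
    rw [e1] at h3
    apply ht1
    rw [nl_off hu, ← card_Zs]
    have : Zs c u (w2 + t1 • w1) = {0} := by
      ext z
      simp only [Zs, Finset.mem_filter, Finset.mem_univ, true_and, Finset.mem_singleton]
      rw [h3 z]; simp
    rw [this]; simp
  refine ⟨w1, w2, u, ?_, !![-b w1 w1, -b w1 w2, 0; -b w2 w1, -b w2 w2, 0; 0, 0, 1], ?_, ?_, ?_⟩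
  · intro x y z hxyz
    obtain ⟨k1, k2, k3⟩ := hLI z x y (by rw [← hxyz]; abel)
    exact ⟨k2, k3, k1⟩
  · rw [isUnit_iff_ne_zero, Matrix.det_fin_three]
    simp [hb11, hb12, hb21]
  · have hneg : ∀ a : F, (-a) ^ q = -(a ^ q) := by
      intro a
      have := hadd a (-a)
      rw [add_neg_cancel, h0q] at this
      linear_combination -this
    ext i j
    fin_cases i <;> fin_cases j <;> simp [hneg, hb11, hb22, hb12, hqq, h0q]
  · intro y
    have := (hcon (hK (y 0) (y 1))).2 (y 2)
    rw [this, hform]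
    simp only [Fin.sum_univ_three]
    simp
    rw [← sub_eq_zero]
    constructor
    · intro h; rw [← h]; ring
    · intro h; rw [← h]; ring

end A7
end QH


namespace QH
open scoped Classical
set_option linter.unusedSectionVars false

section A8
variable {F : Type} [Field F] [Fintype F]

/-- the point spanned by a vector -/
def pt {n : ℕ} (x : Fin n → F) (hx : x ≠ 0) : ProjPoint F n :=
  ⟨Submodule.span F {x}, finrank_span_singleton hx⟩

theorem exists_pt {n : ℕ} (P : ProjPoint F n) : ∃ x, ∃ hx : x ≠ 0, P = pt x hx := by
  obtain ⟨x, hx, h⟩ := finrank_eq_one_iff'.mp P.2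
  have hx0 : (x : Fin n → F) ≠ 0 := by simpa using hx
  refine ⟨x, hx0, Subtype.ext ?_⟩
  apply le_antisymm
  · intro y hy
    obtain ⟨a, ha⟩ := h ⟨y, hy⟩
    exact Submodule.mem_span_singleton.mpr ⟨a, congrArg Subtype.val ha⟩
  · show Submodule.span F {(x : Fin n → F)} ≤ P.1
    rw [Submodule.span_singleton_le_iff_mem]; exact x.2

theorem pt_mem {n : ℕ} {x : Fin n → F} (hx : x ≠ 0) (L : Submodule F (Fin n → F)) :
    pt x hx ∈ pointsIn F n L ↔ x ∈ L := by
  show Submodule.span F {x} ≤ L ↔ _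
  rw [Submodule.span_singleton_le_iff_mem]

theorem exists_functional {r : ℕ} {W : Submodule F (Fin (r + 1) → F)} (hW : finrank F W = r) :
    ∃ φ : (Fin (r + 1) → F) →ₗ[F] F, LinearMap.ker φ = W := by
  have hlt : W < ⊤ := by
    rw [lt_top_iff_ne_top]
    rintro rfl
    rw [finrank_top, finrank_fin_fun] at hW
    omega
  obtain ⟨φ, hφ, hle⟩ := Submodule.exists_le_ker_of_lt_top W hlt
  refine ⟨φ, (Submodule.eq_of_le_of_finrank_eq hle ?_).symm⟩
  have h1 := LinearMap.finrank_range_add_finrank_ker φ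
  have h2 : LinearMap.range φ = ⊤ := LinearMap.range_eq_top.mpr (LinearMap.surjective hφ)
  rw [h2, finrank_top, finrank_self, finrank_fin_fun] at h1
  omega

theorem lift_code (p r : ℕ) [Fact p.Prime] [CharP F p] {v : ProjPoint F (r + 1) → ZMod p}
    (hv : v ∈ hypCode F p (r + 1)) :
    ∃ c ∈ Cd F (Fin (r + 1) → F), ∀ x (hx : x ≠ 0),
      c x = ZMod.castHom (dvd_refl p) F (v (pt x hx)) := by
  induction hv using Submodule.span_induction with
  | mem f hf =>
    obtain ⟨W, hW, rfl⟩ := hf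
    obtain ⟨φ, rfl⟩ := exists_functional (r := r) (by simpa using hW)
    refine ⟨ind φ, ind_mem φ, fun x hx => ?_⟩
    by_cases hxk : φ x = 0
    · have : pt x hx ∈ pointsIn F (r + 1) (LinearMap.ker φ) := (pt_mem hx _).mpr hxk
      rw [charVec, Set.indicator_of_mem this]
      simp [ind, hxk]
    · have : pt x hx ∉ pointsIn F (r + 1) (LinearMap.ker φ) := fun h => hxk ((pt_mem hx _).mp h)
      rw [charVec, Set.indicator_of_notMem this]
      simp [ind, hxk]
  | zero => exact ⟨0, Submodule.zero_mem _, fun x hx => by simp⟩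
  | add f g _ _ h1 h2 =>
    obtain ⟨c1, hc1, e1⟩ := h1
    obtain ⟨c2, hc2, e2⟩ := h2
    refine ⟨c1 + c2, Submodule.add_mem _ hc1 hc2, fun x hx => ?_⟩
    rw [Pi.add_apply, Pi.add_apply, map_add, e1 x hx, e2 x hx]
  | smul a f _ h1 =>
    obtain ⟨c1, hc1, e1⟩ := h1
    refine ⟨ZMod.castHom (dvd_refl p) F a • c1, Submodule.smul_mem _ _ hc1, fun x hx => ?_⟩
    rw [Pi.smul_apply, Pi.smul_apply, smul_eq_mul, smul_eq_mul, map_mul, e1 x hx]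

theorem sum_code (r : ℕ) (hr : 1 ≤ r) {c : (Fin (r + 1) → F) → F} (hc : c ∈ Cd F (Fin (r + 1) → F)) :
    ∑ x, c x = 0 := by
  induction hc using Submodule.span_induction with
  | mem f hf =>
    obtain ⟨φ, rfl⟩ := hf
    have h1 : ∑ x, ind φ x = (Fintype.card (LinearMap.ker φ) : F) := by
      simp only [ind]
      rw [Finset.sum_boole, Fintype.card_subtype]
      simp only [LinearMap.mem_ker]
    rw [h1, Module.card_eq_pow_finrank (K := F), Nat.cast_pow, FiniteField.cast_card_eq_zero]
    have h1 := LinearMap.finrank_range_add_finrank_ker φ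
    have h2 := Submodule.finrank_le (LinearMap.range φ)
    rw [finrank_self] at h2
    rw [finrank_fin_fun] at h1
    exact zero_pow (by omega)
  | zero => simp
  | add f g _ _ h1 h2 => simp [Finset.sum_add_distrib, h1, h2]
  | smul a f _ h1 => simp [← Finset.mul_sum, h1]

theorem Sc_secant {n : ℕ} (V : Set (ProjPoint F n)) (c : (Fin n → F) → F)
    (hc : ∀ x (hx : x ≠ 0), c x ≠ 0 ↔ pt x hx ∈ V) (L : Submodule F (Fin n → F)) :
    Sc c L = (Fintype.card F - 1) * secant F n V L := by
  have : Finite (Submodule F (Fin n → F)) :=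
    Finite.of_injective (fun W => (W : Set (Fin n → F))) SetLike.coe_injective
  set T : Finset (Submodule F (Fin n → F)) :=
    (Set.toFinite (Set.image Subtype.val (V ∩ pointsIn F n L))).toFinset with hT
  have hTc : T.card = secant F n V L := by
    rw [hT, ← Set.ncard_eq_toFinset_card, secant]
    exact Set.ncard_image_of_injective _ Subtype.val_injective
  rw [Sc, Finset.card_eq_sum_card_fiberwise (f := fun x => Submodule.span F {x}) (t := T)]
  · rw [← hTc, mul_comm, ← smul_eq_mul, ← Finset.sum_const]
    refine Finset.sum_congr rfl fun W hW => ?_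
    simp only [hT, Set.Finite.mem_toFinset, Set.mem_image] at hW
    obtain ⟨P, ⟨hPV, hPL⟩, rfl⟩ := hW
    obtain ⟨x, hx, rfl⟩ := exists_pt P
    rw [← Finset.card_univ, ← Finset.card_erase_of_mem (Finset.mem_univ (0 : F))]
    symm
    apply Finset.card_bij (fun a _ => a • x)
    · intro a ha
      have ha0 := Finset.ne_of_mem_erase ha
      have hax : a • x ≠ 0 := smul_ne_zero ha0 hx
      have hsp : Submodule.span F {a • x} = Submodule.span F {x} :=
        Submodule.span_singleton_smul_eq (IsUnit.mk0 a ha0) x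
      simp only [Finset.mem_filter, Finset.mem_univ, true_and]
      refine ⟨⟨L.smul_mem a ((pt_mem hx L).mp hPL), hax, ?_⟩, hsp⟩
      rw [hc _ hax]
      have : pt (a • x) hax = pt x hx := Subtype.ext hsp
      rw [this]; exact hPV
    · intro a _ b _ hab
      exact smul_left_injective F hx hab
    · intro y hy
      simp only [Finset.mem_filter, Finset.mem_univ, true_and] at hy
      have hy2 : Submodule.span F {y} = Submodule.span F {x} := hy.2
      have : y ∈ Submodule.span F {x} := by
        rw [← hy2]; exact Submodule.mem_span_singleton_self y
      obtain ⟨a, rfl⟩ := Submodule.mem_span_singleton.mp this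
      refine ⟨a, ?_, rfl⟩
      rw [Finset.mem_erase]
      refine ⟨?_, Finset.mem_univ _⟩
      rintro rfl
      exact hy.1.2.1 (zero_smul F x)
  · intro x hx
    have hx' : x ∈ L ∧ x ≠ 0 ∧ c x ≠ 0 := by simpa using hx
    simp only [hT, Set.Finite.coe_toFinset, Set.mem_image]
    exact ⟨pt x hx'.2.1, ⟨(hc x hx'.2.1).mp hx'.2.2, (pt_mem _ _).mpr hx'.1⟩, rfl⟩

theorem charP_of_card (p h q : ℕ) (hp : p.Prime) (hh : 1 ≤ h) (hq : q = p ^ h)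
    (hF : Fintype.card F = q ^ 2) : CharP F p := by
  obtain ⟨p', hp'⟩ := CharP.exists F
  obtain ⟨n, hpp, hcard⟩ := FiniteField.card F p'
  have : p' ∣ p ^ (h * 2) := by
    rw [pow_mul, ← hq, ← hF, hcard]; exact dvd_pow_self _ n.ne_zero
  have := (Nat.prime_dvd_prime_iff_eq hpp hp).mp (hpp.dvd_of_dvd_pow this)
  subst this
  exact hp'

end A8
end QH

/-- if a plane `π` contains exactly `q³ + 1` points of `V`, then
`π ∩ V` is a classical unital of `π`. -/
theorem stmt10 (p h q r : ℕ) (hp : p.Prime) (hh : 1 ≤ h) (hq : q = p ^ h) (hq4 : 4 < q)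
    (hr : 3 ≤ r)
    (F : Type) [Field F] [Fintype F] (hF : Fintype.card F = q ^ 2)
    (V : Set (ProjPoint F (r + 1))) (hV : IsQuasiHermitian F q r V)
    (hcode : charVec F p (r + 1) V ∈ hypCode F p (r + 1))
    (π : Submodule F (Fin (r + 1) → F)) (hπ : finrank F π = 3)
    (hsize : secant F (r + 1) V π = q ^ 3 + 1) :
    IsClassicalUnital F q (r + 1) π (V ∩ pointsIn F (r + 1) π) := by
  classical
  have hpf : Fact p.Prime := ⟨hp⟩
  have hchar : CharP F p := QH.charP_of_card p h q hp hh hq hF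
  have hpq : p ∣ q := by rw [hq]; exact dvd_pow_self p (by omega)
  have hq6 : q ≠ 6 := by
    intro h6
    rw [h6] at hq
    have h2 : 2 ∣ p := Nat.prime_two.dvd_of_dvd_pow (n := h) (by rw [← hq]; norm_num)
    have h3 : 3 ∣ p := Nat.prime_three.dvd_of_dvd_pow (n := h) (by rw [← hq]; norm_num)
    have e2 := (Nat.prime_dvd_prime_iff_eq Nat.prime_two hp).mp h2
    have e3 := (Nat.prime_dvd_prime_iff_eq Nat.prime_three hp).mp h3
    omega
  obtain ⟨m, rfl⟩ : ∃ m, r = m + 2 := ⟨r - 2, by omega⟩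
  obtain ⟨c, hc, hcV⟩ := QH.lift_code (F := F) p (m + 2) hcode
  have hin : ∀ x (hx : x ≠ 0), QH.pt x hx ∈ V → c x = 1 := by
    intro x hx hm
    rw [hcV x hx, charVec, Set.indicator_of_mem hm]; simp
  have hout : ∀ x (hx : x ≠ 0), QH.pt x hx ∉ V → c x = 0 := by
    intro x hx hm
    rw [hcV x hx, charVec, Set.indicator_of_notMem hm]; simp
  have hiff : ∀ x (hx : x ≠ 0), c x ≠ 0 ↔ QH.pt x hx ∈ V := by
    intro x hx
    constructor
    · intro h1; by_contra h2; exact h1 (hout x hx h2)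
    · intro h1; rw [hin x hx h1]; exact one_ne_zero
  have hqF : (q : F) = 0 := (CharP.cast_eq_zero_iff F p q).mpr hpq
  have hcard1 : ((Fintype.card F - 1 : ℕ) : ℤ) = (q : ℤ) ^ 2 - 1 := by
    rw [Nat.cast_sub (Fintype.card_pos (α := F)), hF]; push_cast; rfl
  obtain ⟨ε, hεdef⟩ : ∃ ε : ℤ, ε = (-1) ^ m := ⟨_, rfl⟩
  have hε : ε = 1 ∨ ε = -1 := by rw [hεdef]; exact neg_one_pow_eq_or ℤ m
  have hε2 : ε * ε = 1 := by rcases hε with rfl | rfl <;> norm_num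
  have er : (-1 : ℤ) ^ (m + 2) = ε := by rw [hεdef, pow_add]; norm_num
  have er1 : (-1 : ℤ) ^ (m + 2 - 1) = -ε := by
    rw [hεdef, show m + 2 - 1 = m + 1 by omega, pow_succ]; ring
  obtain ⟨hV1, hV2⟩ := hV
  rw [er] at hV1
  have hVtop : (QH.Sc c ⊤ : ℤ) = ((q : ℤ) ^ 3 * q ^ m + ε) * ((q : ℤ) ^ 2 * q ^ m - ε) := by
    rw [QH.Sc_secant V c hiff ⊤]
    have : secant F (m + 2 + 1) V ⊤ = V.ncard := by
      rw [secant]; congr 1; ext P; simp [pointsIn]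
    rw [this]; push_cast [hcard1]
    rw [mul_comm, hV1]; ring
  have hS : ∀ φ : (Fin (m + 2 + 1) → F) →ₗ[F] F, φ ≠ 0 → (QH.Sc c (LinearMap.ker φ) : ℤ) =
        ((q : ℤ) ^ 2 * q ^ m - ε) * (q * q ^ m + ε) ∨
      (QH.Sc c (LinearMap.ker φ) : ℤ) =
        (q : ℤ) ^ 2 - 1 + q ^ 2 * ((q * q ^ m + ε) * (q ^ m - ε)) := by
    intro φ hφ
    have hk : finrank F (LinearMap.ker φ) = m + 2 := by
      have h1 := LinearMap.finrank_range_add_finrank_ker φ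
      have h2 : LinearMap.range φ = ⊤ := LinearMap.range_eq_top.mpr (LinearMap.surjective hφ)
      rw [h2, finrank_top, finrank_self, finrank_fin_fun] at h1
      omega
    have h3 := hV2 _ hk
    rw [er, er1, show m + 2 - 1 = m + 1 by omega, show m + 2 - 2 = m by omega] at h3
    rw [QH.Sc_secant V c hiff]
    push_cast [hcard1]
    rw [mul_comm]
    rcases h3 with h3 | h3
    · left; rw [h3]; ring
    · right; rw [h3]; ring
  have h0 : c 0 = 1 := by
    have h1 := QH.sum_code (m + 2) (by omega) hc
    rw [← Finset.add_sum_erase _ _ (Finset.mem_univ (0 : Fin (m + 2 + 1) → F))] at h1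
    have h2 : ∑ x ∈ Finset.univ.erase (0 : Fin (m + 2 + 1) → F), c x = (QH.Sc c ⊤ : F) := by
      rw [QH.Sc, Finset.card_filter, Nat.cast_sum,
        ← Finset.add_sum_erase _ _ (Finset.mem_univ (0 : Fin (m + 2 + 1) → F))]
      simp only [ne_eq, not_true_eq_false, false_and, and_false, if_false, Nat.cast_zero, zero_add]
      refine Finset.sum_congr rfl fun x hx => ?_
      have hx0 := Finset.ne_of_mem_erase hx
      by_cases hm : QH.pt x hx0 ∈ V
      · simp [hin x hx0 hm, hx0]
      · simp [hout x hx0 hm]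
    have h3 : (QH.Sc c ⊤ : F) = -1 := by
      have := congrArg (fun z : ℤ => (z : F)) hVtop
      push_cast at this
      rw [this, hqF]
      have e : (ε : F) * ε = 1 := by exact_mod_cast congrArg (fun z : ℤ => (z : F)) hε2
      linear_combination -e
    rw [h2, h3] at h1
    linear_combination h1
  have hb : QH.Bin c := by
    intro x
    by_cases hx : x = 0
    · right; rw [hx, h0]
    · by_cases hm : QH.pt x hx ∈ V
      · right; exact hin x hx hm
      · left; exact hout x hx hm
  letI : Fintype π := Fintype.ofFinite π
  have hH : QH.PlaneHyp (E := π) p q (fun x : π => c (π.subtype x)) := by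
    refine ⟨hp, hpq, hq4, hF, QH.Cd.comp hc π.subtype, fun x => hb _, by simpa using h0, hπ, ?_, ?_⟩
    · rw [← hsize, ← QH.Sc_secant V c hiff π, QH.Sc, QH.Sc]
      refine Finset.card_bij (fun x _ => (x : Fin (m + 2 + 1) → F)) ?_ ?_ ?_
      · intro x hx
        simpa using hx
      · intro x _ y _ hxy
        exact Subtype.ext hxy
      · intro x hx
        have hx' : x ∈ π ∧ x ≠ 0 ∧ c x ≠ 0 := by simpa using hx
        exact ⟨⟨x, hx'.1⟩, by simpa using hx'.2, rfl⟩
    · intro u v huv hu b hb1 hbq hN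
      refine QH.no_long p q m hp hpq hq4 hq6 (by omega) hF hc hb h0 ε hε (by simp) hVtop hS
        (u := (u : Fin (m + 2 + 1) → F)) (v := v) ?_ hu b hb1 hbq hN
      intro x y hxy
      exact huv x y (Subtype.ext (by simpa using hxy))
  obtain ⟨w1, w2, u, hli, A, hA1, hA2, hA3⟩ := hH.main hq
  have hsp := hli.span_top hπ
  set e : (Fin 3 → F) →ₗ[F] (Fin (m + 2 + 1) → F) :=
    π.subtype ∘ₗ Fintype.linearCombination F ![w1, w2, u] with he
  have hev : ∀ y, e y = ((y 0 • w1 + y 1 • w2 + y 2 • u : π) : Fin (m + 2 + 1) → F) := by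
    intro y
    rw [he, LinearMap.comp_apply, Fintype.linearCombination_apply, Fin.sum_univ_three]
    rfl
  have hker : LinearMap.ker e = ⊥ := by
    rw [LinearMap.ker_eq_bot']
    intro y hy
    rw [hev] at hy
    obtain ⟨k0, k1, k2⟩ := hli (y 0) (y 1) (y 2) (Subtype.ext hy)
    ext i
    fin_cases i
    · exact k0
    · exact k1
    · exact k2
  have hrange : ∀ x ∈ π, ∃ y, e y = x := by
    intro x hx
    have hm : (⟨x, hx⟩ : π) ∈ Submodule.span F {w1, w2, u} := by rw [hsp]; trivial
    obtain ⟨a, b, d, habd⟩ := Submodule.mem_span_triple.mp hm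
    refine ⟨![a, b, d], ?_⟩
    rw [hev]
    exact congrArg Subtype.val habd
  refine ⟨e, hker, ?_, A, hA1, hA2, ?_⟩
  · apply le_antisymm
    · rintro _ ⟨y, rfl⟩
      rw [hev]; exact Subtype.property _
    · intro x hx
      exact hrange x hx
  · have hA3' : ∀ y, c (e y) ≠ 0 ↔ ∑ i, ∑ j, y i * A i j * (y j) ^ q = 0 := by
      intro y; rw [hev]; exact hA3 y
    ext P
    constructor
    · rintro ⟨hPV, hPπ⟩
      obtain ⟨x, hx, rfl⟩ := QH.exists_pt P
      obtain ⟨y, rfl⟩ := hrange x ((QH.pt_mem hx π).mp hPπ)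
      refine ⟨y, ?_, rfl, (hA3' y).mp ((hiff _ hx).mpr hPV)⟩
      rintro rfl
      exact hx (map_zero e)
    · rintro ⟨y, hy, hP, hform⟩
      have hx : e y ≠ 0 := fun h0 => hy (LinearMap.ker_eq_bot'.mp hker y h0)
      have : P = QH.pt (e y) hx := Subtype.ext hP
      rw [this]
      refine ⟨(hiff _ hx).mp ((hA3' y).mpr hform), (QH.pt_mem hx π).mpr ?_⟩
      rw [hev]; exact Subtype.property _
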